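/- arXiv:1503.06982 — 3 statements merged into one kernel-verified Lean document; each statement's English description precedes it below -/
import Mathlib

section
/- Let d1, d2 be natural numbers, n1 the number of monomials in one variable of degree at most d1, and n2 the number of monomials in two variables of total degree at most d2. Let Z1(x) denote the column vector of all monomials x^i with 0 ≤ i ≤ d1, and Z2(x,ξ) the column vector of all monomials x^i ξ^j with i + j ≤ d2. Let U be a symmetric real matrix of size (n1 + 2n2) × (n1 + 2n2) with blocks U11 (n1×n1), U12, U13 (n1×n2), U22, U23, U32, U33 (n2×n2), U21 = U12ᵀ, U31 = U13ᵀ, U23 = U32ᵀ, and suppose ε1 > 0 and U − diag(ε1·I_{n1}, 0, 0) is positive semidefinite. Define M(x) = Z1(x)ᵀ U11 Z1(x) and K1(x,ξ) = Z1(x)ᵀ U12 Z2(x,ξ) + Z2(ξ,x)ᵀ U31 Z1(ξ) + ∫₀^ξ Z2(η,x)ᵀ U33 Z2(η,ξ) dη + ∫_ξ^x Z2(η,x)ᵀ U32 Z2(η,ξ) dη + ∫_x^1 Z2(η,x)ᵀ U22 Z2(η,ξ) dη, and set K2(x,ξ) = K1(ξ,x). Then for every continuous function z : [0,1] → ℝ,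 the operator P defined by (Pz)(x) = M(x)z(x) + ∫₀^x K1(x,ξ)z(ξ)dξ + ∫_x^1 K2(x,ξ)z(ξ)dξ satisfies ∫₀¹ (Pz)(x) z(x) dx ≥ ε1 ∫₀¹ z(x)² dx. -/
open MeasureTheory

noncomputable section

/-- Column vector of all monomials `x^i` with `0 ≤ i ≤ d1`. -/
def Z1vec (d1 : ℕ) (x : ℝ) : Fin (d1 + 1) → ℝ := fun i => x ^ (i : ℕ)

/-- Index type for monomials `x^i ξ^j` with `i + j ≤ d2`. -/
def I2idx (d2 : ℕ) : Type :=
  {p : Fin (d2 + 1) × Fin (d2 + 1) // (p.1 : ℕ) + (p.2 : ℕ) ≤ d2}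

instance (d2 : ℕ) : Fintype (I2idx d2) := by unfold I2idx; infer_instance
instance (d2 : ℕ) : DecidableEq (I2idx d2) := by unfold I2idx; infer_instance

/-- Column vector of all monomials `x^i ξ^j` with `i + j ≤ d2`. -/
def Z2vec (d2 : ℕ) (x ξ : ℝ) : I2idx d2 → ℝ :=
  fun p => x ^ (p.1.1 : ℕ) * ξ ^ (p.1.2 : ℕ)

/-!
The operator factors as `P = T* B T`, where `B` is the bilinear form of `U` and
`(T z)(η) = (Z₁(η) z(η), ∫₀^η Z₂(η, ξ) z(ξ) dξ, ∫_η^1 Z₂(η, ξ) z(ξ) dξ)`. Written with a single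
kernel that is split along the diagonal, `T` makes the kernel of `T* B T` equal to `K₁` below the
diagonal and, as `U` is symmetric, to `K₂` above it. By Fubini `⟨P z, z⟩ = ∫ B (T z) (T z)`, and
`U - diag(ε₁ I, 0, 0) ⪰ 0` bounds the integrand below by `ε₁ |Z₁(η)|² z(η)²`, where
`|Z₁(η)|² ≥ 1` because `1` is one of the monomials.
-/

section GramKernel

open Function

variable {X E F : Type*} [MeasurableSpace X] {μ : Measure X}
  [NormedAddCommGroup E] [NormedSpace ℝ E] [NormedAddCommGroup F] [NormedSpace ℝ F]

/-- The integral kernel of `T* B T`, where `(T z)(η) = z η • g η + ∫ ξ, z ξ • G η ξ ∂μ` takes values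
in `E`. It omits the multiplication part:
`(T* B T z)(x) = B (g x) (g x) * z x + ∫ ξ, gramKernel μ B g G x ξ * z ξ ∂μ`. -/
def gramKernel (μ : Measure X) (B : E →L[ℝ] E →L[ℝ] ℝ) (g : X → E) (G : X → X → E) (x ξ : X) : ℝ :=
  B (g x) (G x ξ) + B (G ξ x) (g ξ) + ∫ η, B (G η x) (G η ξ) ∂μ

theorem gramKernel_comm {B : E →L[ℝ] E →L[ℝ] ℝ} (hB : ∀ v w, B v w = B w v)
    (g : X → E) (G : X → X → E) (x ξ : X) :
    gramKernel μ B g G x ξ = gramKernel μ B g G ξ x := by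
  simp only [gramKernel, hB (G _ _) (g _), hB (G _ x) (G _ ξ)]
  ring

theorem gramKernel_smul (B : E →L[ℝ] E →L[ℝ] ℝ) (g : X → E) (G : X → X → E) (z : X → ℝ) (x ξ : X) :
    gramKernel μ B (fun x => z x • g x) (fun x ξ => z ξ • G x ξ) x ξ =
      gramKernel μ B g G x ξ * z ξ * z x := by
  simp only [gramKernel, map_smul, smul_apply, smul_eq_mul, integral_const_mul]
  ring

theorem integrable_bilin_of_memLp_two (B : E →L[ℝ] F →L[ℝ] ℝ) {f : X → E} {h : X → F}
    (hf : MemLp f 2 μ) (hh : MemLp h 2 μ) : Integrable (fun x => B (f x) (h x)) μ :=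
  memLp_one_iff_integrable.1 (B.memLp_of_bilin 1 hf hh)

variable [IsFiniteMeasure μ] {g : X → E} {G : X → X → E} {H : X → X → F}

theorem integrable_prod_bilin_kernel (B : E →L[ℝ] F →L[ℝ] ℝ)
    (hG : MemLp (uncurry G) 2 (μ.prod μ)) (hH : MemLp (uncurry H) 2 (μ.prod μ)) :
    Integrable (uncurry fun η (p : X × X) => B (G η p.1) (H η p.2)) (μ.prod (μ.prod μ)) := by
  have assoc : MeasurePreserving (MeasurableEquiv.prodAssoc.symm : X × X × X → (X × X) × X)
      (μ.prod (μ.prod μ)) ((μ.prod μ).prod μ) :=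
    (measurePreserving_prodAssoc μ μ μ).symm
  have swap : MeasurePreserving (Prod.map id Prod.swap : X × X × X → X × X × X)
      (μ.prod (μ.prod μ)) (μ.prod (μ.prod μ)) :=
    (MeasurePreserving.id μ).prod Measure.measurePreserving_swap
  exact integrable_bilin_of_memLp_two B ((hG.comp_fst μ).comp_measurePreserving assoc)
    ((hH.comp_fst μ).comp_measurePreserving (assoc.comp swap))

theorem memLp_integral_kernel (hG : MemLp (uncurry G) 2 (μ.prod μ)) :
    MemLp (fun η => ∫ ξ, G η ξ ∂μ) 2 μ := by
  have hmeas : AEStronglyMeasurable (fun η => ∫ ξ, G η ξ ∂μ) μ :=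
    hG.aestronglyMeasurable.integral_prod_right'
  have hnorm : MemLp (uncurry fun η ξ => ‖G η ξ‖) 2 (μ.prod μ) := hG.norm
  have hsq : Integrable (fun η => (∫ ξ, ‖G η ξ‖ ∂μ) ^ 2) μ := by
    refine (integrable_prod_bilin_kernel (.mul ℝ ℝ) hnorm hnorm).integral_prod_left.congr ?_
    filter_upwards with η
    simp [integral_prod_mul (fun x => ‖G η x‖) (fun x => ‖G η x‖), sq]
  refine (memLp_two_iff_integrable_sq_norm hmeas).2 (hsq.mono' (hmeas.norm.pow 2) ?_)
  filter_upwards with η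
  rw [norm_pow, norm_norm]
  gcongr
  exact norm_integral_le_integral_norm _

theorem integrable_gramKernel (B : E →L[ℝ] E →L[ℝ] ℝ)
    (hg : MemLp g 2 μ) (hG : MemLp (uncurry G) 2 (μ.prod μ)) :
    Integrable (uncurry (gramKernel μ B g G)) (μ.prod μ) :=
  ((integrable_bilin_of_memLp_two B (hg.comp_fst μ) hG).add
    (integrable_bilin_of_memLp_two B hG (hg.comp_fst μ)).swap).add
    (integrable_prod_bilin_kernel B hG hG).integral_prod_right

variable [CompleteSpace E]

theorem integral_integral_bilin_left (B : F →L[ℝ] E →L[ℝ] ℝ) (f : X → F)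
    (hG : MemLp (uncurry G) 2 (μ.prod μ)) :
    ∫ x, ∫ ξ, B (f x) (G x ξ) ∂μ ∂μ = ∫ η, B (f η) (∫ ξ, G η ξ ∂μ) ∂μ := by
  refine integral_congr_ae ?_
  filter_upwards [(hG.integrable one_le_two).prod_right_ae] with x hGx
  exact (B (f x)).integral_comp_comm hGx

theorem integral_integral_bilin_right (B : E →L[ℝ] F →L[ℝ] ℝ) {f : X → F}
    (hf : MemLp f 2 μ) (hG : MemLp (uncurry G) 2 (μ.prod μ)) :
    ∫ x, ∫ ξ, B (G ξ x) (f ξ) ∂μ ∂μ = ∫ η, B (∫ ξ, G η ξ ∂μ) (f η) ∂μ := by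
  have hint : Integrable (uncurry fun ξ x => B (G ξ x) (f ξ)) (μ.prod μ) :=
    integrable_bilin_of_memLp_two B hG (hf.comp_fst μ)
  rw [← integral_integral_swap hint]
  exact integral_integral_bilin_left B.flip f hG

theorem integral_integral_integral_bilin [CompleteSpace F] (B : E →L[ℝ] F →L[ℝ] ℝ)
    (hG : MemLp (uncurry G) 2 (μ.prod μ)) (hH : MemLp (uncurry H) 2 (μ.prod μ)) :
    ∫ x, ∫ ξ, ∫ η, B (G η x) (H η ξ) ∂μ ∂μ ∂μ =
      ∫ η, B (∫ x, G η x ∂μ) (∫ ξ, H η ξ ∂μ) ∂μ := by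
  have hint := integrable_prod_bilin_kernel B hG hH
  calc
    _ = ∫ p : X × X, ∫ η, B (G η p.1) (H η p.2) ∂μ ∂μ.prod μ :=
      (integral_prod _ hint.integral_prod_right).symm
    _ = ∫ η, ∫ p : X × X, B (G η p.1) (H η p.2) ∂μ.prod μ ∂μ := (integral_integral_swap hint).symm
    _ = _ := by
      refine integral_congr_ae ?_
      filter_upwards [(hG.integrable one_le_two).prod_right_ae,
        (hH.integrable one_le_two).prod_right_ae] with η hGη hHη
      exact integral_prod_bilin B hGη hHη

theorem integral_integral_gramKernel (B : E →L[ℝ] E →L[ℝ] ℝ)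
    (hg : MemLp g 2 μ) (hG : MemLp (uncurry G) 2 (μ.prod μ)) :
    ∫ x, ∫ ξ, gramKernel μ B g G x ξ ∂μ ∂μ =
      (∫ η, B (g η) (∫ ξ, G η ξ ∂μ) ∂μ) + (∫ η, B (∫ ξ, G η ξ ∂μ) (g η) ∂μ) +
        ∫ η, B (∫ ξ, G η ξ ∂μ) (∫ ξ, G η ξ ∂μ) ∂μ := by
  have hleft := integrable_bilin_of_memLp_two B (hg.comp_fst μ) hG
  have hright := (integrable_bilin_of_memLp_two B hG (hg.comp_fst μ)).swap
  have hcomp := (integrable_prod_bilin_kernel B hG hG).integral_prod_right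
  rw [← integral_integral_bilin_left B g hG, ← integral_integral_bilin_right B hg hG,
    ← integral_integral_integral_bilin B hG hG]
  exact (integral_integral_add (hleft.add hright) hcomp).trans
    (congrArg (· + _) (integral_integral_add hleft hright))

theorem integral_add_integral_gramKernel (B : E →L[ℝ] E →L[ℝ] ℝ)
    (hg : MemLp g 2 μ) (hG : MemLp (uncurry G) 2 (μ.prod μ)) :
    ∫ x, (B (g x) (g x) + ∫ ξ, gramKernel μ B g G x ξ ∂μ) ∂μ =
      ∫ η, B (g η + ∫ ξ, G η ξ ∂μ) (g η + ∫ ξ, G η ξ ∂μ) ∂μ := by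
  have hT := memLp_integral_kernel hG
  have hgg := integrable_bilin_of_memLp_two B hg hg
  have hgT := integrable_bilin_of_memLp_two B hg hT
  have hTg := integrable_bilin_of_memLp_two B hT hg
  have hTT := integrable_bilin_of_memLp_two B hT hT
  have hker : Integrable (fun x => ∫ ξ, gramKernel μ B g G x ξ ∂μ) μ :=
    (integrable_gramKernel B hg hG).integral_prod_left
  rw [integral_add hgg hker, integral_integral_gramKernel B hg hG]
  simp only [map_add, add_apply]
  rw [integral_add (hgg.fun_add hTg) (hgT.fun_add hTT), integral_add hgg hTg, integral_add hgT hTT]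
  ring

end GramKernel

section Semiseparable

open Function Set

variable {E : Type*}

/-- The kernel equal to `f₂` below the diagonal and to `f₃` above it, so that integrating it against
`z` in its second variable gives `∫ ξ in a..η, z ξ • f₂ η ξ` plus `∫ ξ in η..b, z ξ • f₃ η ξ`. -/
def splitKernel (f₂ f₃ : ℝ → ℝ → E) (η ξ : ℝ) : E :=
  if ξ ≤ η then f₂ η ξ else f₃ η ξ

theorem splitKernel_of_le (f₂ f₃ : ℝ → ℝ → E) {η ξ : ℝ} (h : ξ ≤ η) :
    splitKernel f₂ f₃ η ξ = f₂ η ξ :=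
  if_pos h

theorem splitKernel_of_lt (f₂ f₃ : ℝ → ℝ → E) {η ξ : ℝ} (h : η < ξ) :
    splitKernel f₂ f₃ η ξ = f₃ η ξ :=
  if_neg h.not_ge

variable [NormedAddCommGroup E]

theorem memLp_restrict_of_subset_isCompact {Y : Type*} [TopologicalSpace Y] [MeasurableSpace Y]
    [OpensMeasurableSpace Y] [SecondCountableTopologyEither Y E] {f : Y → E} (hf : Continuous f)
    {s K : Set Y} (hs : MeasurableSet s) (hK : IsCompact K) (hsK : s ⊆ K) (p : ENNReal)
    (μ : Measure Y) [IsFiniteMeasureOnCompacts μ] :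
    MemLp f p (μ.restrict s) := by
  have : IsFiniteMeasure (μ.restrict s) :=
    isFiniteMeasure_restrict.2 (measure_ne_top_of_subset hsK hK.measure_ne_top)
  obtain ⟨C, hC⟩ := hK.exists_bound_of_continuousOn hf.continuousOn
  exact .of_bound hf.aestronglyMeasurable C
    ((ae_restrict_mem hs).mono fun y hy => hC y (hsK hy))

variable {f₁ : ℝ → E} {f₂ f₃ : ℝ → ℝ → E} {a b : ℝ} {z : ℝ → ℝ}

theorem memLp_splitKernel (hf₂ : Continuous (uncurry f₂)) (hf₃ : Continuous (uncurry f₃))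
    (a b : ℝ) (p : ENNReal) :
    MemLp (uncurry (splitKernel f₂ f₃)) p
      ((volume.restrict (Ioc a b)).prod (volume.restrict (Ioc a b))) := by
  classical
  have hbelow : MeasurableSet {q : ℝ × ℝ | q.2 ≤ q.1} :=
    measurableSet_le measurable_snd measurable_fst
  have hcont {f : ℝ → ℝ → E} (hf : Continuous (uncurry f)) :
      MemLp (uncurry f) p ((volume.restrict (Ioc a b)).prod (volume.restrict (Ioc a b))) := by
    rw [Measure.prod_restrict]
    exact memLp_restrict_of_subset_isCompact hf (measurableSet_Ioc.prod measurableSet_Ioc)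
      (isCompact_Icc.prod isCompact_Icc) (prod_mono Ioc_subset_Icc_self Ioc_subset_Icc_self) p _
  exact MemLp.piecewise hbelow ((hcont hf₂).restrict _) ((hcont hf₃).restrict _)

variable [NormedSpace ℝ E]

/-- The kernel `K₁(x, ξ)`, `ξ < x`, of the semi-separable operator generated by a bilinear form `B`
and functions `f₁`, `f₂`, `f₃`. In the notation of the paper, `f₁(x) = (Z₁(x), 0, 0)`,
`f₂(x, ξ) = (0, Z₂(x, ξ), 0)`, `f₃(x, ξ) = (0, 0, Z₂(x, ξ))` and `B` is the form of `U`. -/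
def semiseparableKernel (a b : ℝ) (B : E →L[ℝ] E →L[ℝ] ℝ) (f₁ : ℝ → E) (f₂ f₃ : ℝ → ℝ → E)
    (x ξ : ℝ) : ℝ :=
  B (f₁ x) (f₂ x ξ) + B (f₃ ξ x) (f₁ ξ) + (∫ η in a..ξ, B (f₃ η x) (f₃ η ξ)) +
    (∫ η in ξ..x, B (f₃ η x) (f₂ η ξ)) + ∫ η in x..b, B (f₂ η x) (f₂ η ξ)

theorem gramKernel_splitKernel_of_lt (B : E →L[ℝ] E →L[ℝ] ℝ) (f₁ : ℝ → E)
    (hf₂ : Continuous (uncurry f₂)) (hf₃ : Continuous (uncurry f₃))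
    {x ξ : ℝ} (haξ : a ≤ ξ) (hξx : ξ < x) (hxb : x ≤ b) :
    gramKernel (volume.restrict (Ioc a b)) B f₁ (splitKernel f₂ f₃) x ξ =
      semiseparableKernel a b B f₁ f₂ f₃ x ξ := by
  set k : ℝ → ℝ := fun η => B (splitKernel f₂ f₃ η x) (splitKernel f₂ f₃ η ξ)
  have eq_left : EqOn (fun η => B (f₃ η x) (f₃ η ξ)) k (Ioo a ξ) := fun η hη => by
    simp only [k, splitKernel_of_lt _ _ (hη.2.trans hξx), splitKernel_of_lt _ _ hη.2]
  have eq_mid : EqOn (fun η => B (f₃ η x) (f₂ η ξ)) k (Ioo ξ x) := fun η hη => by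
    simp only [k, splitKernel_of_lt _ _ hη.2, splitKernel_of_le _ _ hη.1.le]
  have eq_right : EqOn (fun η => B (f₂ η x) (f₂ η ξ)) k (Ioo x b) := fun η hη => by
    simp only [k, splitKernel_of_le _ _ hη.1.le, splitKernel_of_le _ _ (hξx.trans hη.1).le]
  have integrable_of_eqOn {u v : ℝ} (huv : u ≤ v) {h h' : ℝ → ℝ → E}
      (hh : Continuous (uncurry h)) (hh' : Continuous (uncurry h'))
      (heq : EqOn (fun η => B (h η x) (h' η ξ)) k (Ioo u v)) : IntervalIntegrable k volume u v := by
    have hcont : Continuous fun η => B (h η x) (h' η ξ) := by fun_prop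
    exact (hcont.intervalIntegrable u v).congr_uIoo (uIoo_of_le huv ▸ heq)
  have int_left := integrable_of_eqOn haξ hf₃ hf₃ eq_left
  have int_mid := integrable_of_eqOn hξx.le hf₃ hf₂ eq_mid
  have int_right := integrable_of_eqOn hxb hf₂ hf₂ eq_right
  rw [gramKernel, semiseparableKernel, splitKernel_of_le _ _ hξx.le, splitKernel_of_lt _ _ hξx,
    ← intervalIntegral.integral_of_le (haξ.trans (hξx.le.trans hxb)),
    intervalIntegral.integral_congr_Ioo_of_le haξ eq_left,
    intervalIntegral.integral_congr_Ioo_of_le hξx.le eq_mid,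
    intervalIntegral.integral_congr_Ioo_of_le hxb eq_right,
    ← intervalIntegral.integral_add_adjacent_intervals (int_left.trans int_mid) int_right,
    ← intervalIntegral.integral_add_adjacent_intervals int_left int_mid]
  ring

/-- The function `T z` with values in the block vectors, through which the quadratic form of the
semi-separable operator factors as `⟨P z, z⟩ = ∫ η, B (T z η) (T z η)`. -/
def semiseparableState (a b : ℝ) (f₁ : ℝ → E) (f₂ f₃ : ℝ → ℝ → E) (z : ℝ → ℝ) (η : ℝ) : E :=
  z η • f₁ η + ∫ ξ in Ioc a b, z ξ • splitKernel f₂ f₃ η ξ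

theorem memLp_smul_of_continuous (hf₁ : Continuous f₁)
    (hz : MemLp z 2 (volume.restrict (Ioc a b))) :
    MemLp (fun x => z x • f₁ x) 2 (volume.restrict (Ioc a b)) :=
  (memLp_restrict_of_subset_isCompact hf₁ measurableSet_Ioc isCompact_Icc
    Ioc_subset_Icc_self ⊤ volume).smul hz

theorem memLp_smul_splitKernel (hf₂ : Continuous (uncurry f₂)) (hf₃ : Continuous (uncurry f₃))
    (hz : MemLp z 2 (volume.restrict (Ioc a b))) :
    MemLp (uncurry fun η ξ => z ξ • splitKernel f₂ f₃ η ξ) 2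
      ((volume.restrict (Ioc a b)).prod (volume.restrict (Ioc a b))) :=
  (memLp_splitKernel hf₂ hf₃ a b ⊤).smul (hz.comp_snd _)

theorem memLp_semiseparableState (hf₁ : Continuous f₁) (hf₂ : Continuous (uncurry f₂))
    (hf₃ : Continuous (uncurry f₃)) (hz : MemLp z 2 (volume.restrict (Ioc a b))) :
    MemLp (semiseparableState a b f₁ f₂ f₃ z) 2 (volume.restrict (Ioc a b)) :=
  (memLp_smul_of_continuous hf₁ hz).add
    (memLp_integral_kernel (memLp_smul_splitKernel hf₂ hf₃ hz))

theorem setIntegral_gramKernel_splitKernel_mul {B : E →L[ℝ] E →L[ℝ] ℝ}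
    (hB : ∀ v w, B v w = B w v) (f₁ : ℝ → E)
    (hf₂ : Continuous (uncurry f₂)) (hf₃ : Continuous (uncurry f₃)) {h : ℝ → ℝ} {x : ℝ}
    (hx : x ∈ Ioc a b)
    (hint : IntegrableOn
      (fun ξ => gramKernel (volume.restrict (Ioc a b)) B f₁ (splitKernel f₂ f₃) x ξ * h ξ)
      (Ioc a b)) :
    ∫ ξ in Ioc a b, gramKernel (volume.restrict (Ioc a b)) B f₁ (splitKernel f₂ f₃) x ξ * h ξ =
      (∫ ξ in a..x, semiseparableKernel a b B f₁ f₂ f₃ x ξ * h ξ) +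
        ∫ ξ in x..b, semiseparableKernel a b B f₁ f₂ f₃ ξ x * h ξ := by
  have hab : a ≤ b := hx.1.le.trans hx.2
  have hint' := (intervalIntegrable_iff_integrableOn_Ioc_of_le hab).2 hint
  have hxab : x ∈ uIcc a b := uIcc_of_le hab ▸ Ioc_subset_Icc_self hx
  rw [← intervalIntegral.integral_of_le hab, ← intervalIntegral.integral_add_adjacent_intervals
    (hint'.mono_set (uIcc_subset_uIcc_left hxab)) (hint'.mono_set (uIcc_subset_uIcc_right hxab))]
  congr 1
  · refine intervalIntegral.integral_congr_Ioo_of_le hx.1.le fun ξ hξ => ?_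
    simp only [gramKernel_splitKernel_of_lt B f₁ hf₂ hf₃ hξ.1.le hξ.2 hx.2]
  · refine intervalIntegral.integral_congr_Ioo_of_le hx.2 fun ξ hξ => ?_
    simp only [gramKernel_comm hB f₁ _ x ξ,
      gramKernel_splitKernel_of_lt B f₁ hf₂ hf₃ hx.1.le hξ.1 hξ.2.le]

theorem integral_semiseparable_mul_self [CompleteSpace E] {B : E →L[ℝ] E →L[ℝ] ℝ}
    (hB : ∀ v w, B v w = B w v) (hab : a ≤ b) (hf₁ : Continuous f₁)
    (hf₂ : Continuous (uncurry f₂)) (hf₃ : Continuous (uncurry f₃))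
    (hz : MemLp z 2 (volume.restrict (Ioc a b))) :
    ∫ x in a..b, (B (f₁ x) (f₁ x) * z x +
        (∫ ξ in a..x, semiseparableKernel a b B f₁ f₂ f₃ x ξ * z ξ) +
        ∫ ξ in x..b, semiseparableKernel a b B f₁ f₂ f₃ ξ x * z ξ) * z x =
      ∫ η in a..b,
        B (semiseparableState a b f₁ f₂ f₃ z η) (semiseparableState a b f₁ f₂ f₃ z η) := by
  have hg := memLp_smul_of_continuous hf₁ hz
  have hG := memLp_smul_splitKernel hf₂ hf₃ hz
  rw [intervalIntegral.integral_of_le hab, intervalIntegral.integral_of_le hab]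
  refine Eq.trans (integral_congr_ae ?_) (integral_add_integral_gramKernel B hg hG)
  filter_upwards [(integrable_gramKernel B hg hG).prod_right_ae, ae_restrict_mem measurableSet_Ioc]
    with x hint hx
  simp only [uncurry, gramKernel_smul, mul_assoc] at hint ⊢
  rw [setIntegral_gramKernel_splitKernel_mul hB f₁ hf₂ hf₃ hx hint]
  simp only [← mul_assoc, intervalIntegral.integral_mul_const, map_smul, smul_apply, smul_eq_mul]
  ring

theorem map_semiseparableState [CompleteSpace E] {F : Type*} [NormedAddCommGroup F]
    [NormedSpace ℝ F] [CompleteSpace F] (L : E →L[ℝ] F) (a b : ℝ) (f₁ : ℝ → E)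
    (hL₂ : ∀ x ξ, L (f₂ x ξ) = 0) (hL₃ : ∀ x ξ, L (f₃ x ξ) = 0) (z : ℝ → ℝ) (η : ℝ) :
    L (semiseparableState a b f₁ f₂ f₃ z η) = z η • L (f₁ η) := by
  have hL (ξ : ℝ) : L (z ξ • splitKernel f₂ f₃ η ξ) = 0 := by
    rw [map_smul, splitKernel, apply_ite L, hL₂, hL₃, ite_self, smul_zero]
  have hint : L (∫ ξ in Ioc a b, z ξ • splitKernel f₂ f₃ η ξ) = 0 := by
    by_cases h : IntegrableOn (fun ξ => z ξ • splitKernel f₂ f₃ η ξ) (Ioc a b)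
    · rw [← L.integral_comp_comm h]
      simp only [hL, integral_zero]
    · rw [integral_undef h, map_zero]
  rw [semiseparableState, map_add, map_smul, hint, add_zero]

theorem mul_integral_sq_le_integral_semiseparable_mul_self [CompleteSpace E]
    {B : E →L[ℝ] E →L[ℝ] ℝ} (hB : ∀ v w, B v w = B w v) (hab : a ≤ b) (hf₁ : Continuous f₁)
    (hf₂ : Continuous (uncurry f₂)) (hf₃ : Continuous (uncurry f₃))
    (hz : MemLp z 2 (volume.restrict (Ioc a b))) {ε : ℝ}
    (hε : ∀ η ∈ Icc a b, ε * z η ^ 2 ≤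
      B (semiseparableState a b f₁ f₂ f₃ z η) (semiseparableState a b f₁ f₂ f₃ z η)) :
    ε * (∫ x in a..b, z x ^ 2) ≤
      ∫ x in a..b, (B (f₁ x) (f₁ x) * z x +
        (∫ ξ in a..x, semiseparableKernel a b B f₁ f₂ f₃ x ξ * z ξ) +
        ∫ ξ in x..b, semiseparableKernel a b B f₁ f₂ f₃ ξ x * z ξ) * z x := by
  have hT := memLp_semiseparableState hf₁ hf₂ hf₃ hz
  rw [integral_semiseparable_mul_self hB hab hf₁ hf₂ hf₃ hz, ← intervalIntegral.integral_const_mul]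
  exact intervalIntegral.integral_mono_on hab
    ((intervalIntegrable_iff_integrableOn_Ioc_of_le hab).2 (hz.integrable_sq.const_mul ε))
    ((intervalIntegrable_iff_integrableOn_Ioc_of_le hab).2 (integrable_bilin_of_memLp_two B hT hT))
    hε

end Semiseparable

section Matrix

open Matrix

variable {m n : Type*} [DecidableEq m] {ε : ℝ} {U : Matrix (m ⊕ n) (m ⊕ n) ℝ}

theorem isSymm_of_posSemidef_sub_fromBlocks (hU : (U - fromBlocks (ε • 1) 0 0 0).PosSemidef) :
    U.IsSymm := by
  have hsub : (U - fromBlocks (ε • 1) 0 0 0).IsSymm := by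
    simpa only [IsSymm, ← conjTranspose_eq_transpose_of_trivial] using hU.isHermitian.eq
  have hblock : (fromBlocks (ε • 1) 0 0 0 : Matrix (m ⊕ n) (m ⊕ n) ℝ).IsSymm :=
    (isSymm_one.smul ε).fromBlocks transpose_zero isSymm_zero
  simpa only [sub_add_cancel] using hsub.add hblock

theorem mul_sum_sq_le_toBilin'_of_posSemidef_sub_fromBlocks [Fintype m] [Fintype n]
    [DecidableEq n] (hU : (U - fromBlocks (ε • 1) 0 0 0).PosSemidef) (v : m ⊕ n → ℝ) :
    ε * ∑ i, v (.inl i) ^ 2 ≤ toBilin' U v v := by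
  have hblock : v ⬝ᵥ (fromBlocks (ε • 1) 0 0 0 : Matrix (m ⊕ n) (m ⊕ n) ℝ) *ᵥ v =
      ε * ∑ i, v (.inl i) ^ 2 := by
    simp [fromBlocks_mulVec, dotProduct, Finset.mul_sum, smul_mulVec, sq, mul_left_comm]
  have hnonneg := hU.dotProduct_mulVec_nonneg v
  rw [star_trivial, sub_mulVec, dotProduct_sub, hblock, sub_nonneg] at hnonneg
  rwa [toBilin'_apply']

end Matrix

section BlockVectors

open Function Set

theorem continuous_pi_sumElim {Y E ι κ : Type*} [TopologicalSpace Y] [TopologicalSpace E]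
    {f : Y → ι → E} {h : Y → κ → E} (hf : Continuous f) (hh : Continuous h) :
    Continuous fun y => Sum.elim (f y) (h y) :=
  continuous_pi (Sum.rec (continuous_pi_iff.1 hf) (continuous_pi_iff.1 hh))

theorem semiseparable_operator_lower_bound_general
    {ι κ : Type*} [Fintype ι] [Fintype κ] [DecidableEq ι]
    {a b : ℝ} (hab : a ≤ b) {ε : ℝ} (hε : 0 ≤ ε)
    {Z₁ : ℝ → ι → ℝ} (hZ₁ : Continuous Z₁) (one_le_Z₁ : ∀ x ∈ Icc a b, 1 ≤ ∑ i, Z₁ x i ^ 2)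
    {Z₂ : ℝ → ℝ → κ → ℝ} (hZ₂ : Continuous (uncurry Z₂))
    {U : Matrix (ι ⊕ κ ⊕ κ) (ι ⊕ κ ⊕ κ) ℝ}
    (hU : (U - Matrix.fromBlocks (ε • 1) 0 0 0).PosSemidef)
    {M : ℝ → ℝ} {K₁ K₂ : ℝ → ℝ → ℝ}
    (hM : ∀ x, M x = ∑ i, ∑ j, Z₁ x i * U (.inl i) (.inl j) * Z₁ x j)
    (hK₁ : ∀ x ξ, K₁ x ξ =
        (∑ i, ∑ p, Z₁ x i * U (.inl i) (.inr (.inl p)) * Z₂ x ξ p)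
      + (∑ p, ∑ i, Z₂ ξ x p * U (.inr (.inr p)) (.inl i) * Z₁ ξ i)
      + (∫ η in a..ξ, ∑ p, ∑ q, Z₂ η x p * U (.inr (.inr p)) (.inr (.inr q)) * Z₂ η ξ q)
      + (∫ η in ξ..x, ∑ p, ∑ q, Z₂ η x p * U (.inr (.inr p)) (.inr (.inl q)) * Z₂ η ξ q)
      + (∫ η in x..b, ∑ p, ∑ q, Z₂ η x p * U (.inr (.inl p)) (.inr (.inl q)) * Z₂ η ξ q))
    (hK₂ : ∀ x ξ, K₂ x ξ = K₁ ξ x)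
    {z : ℝ → ℝ} (hz : MemLp z 2 (volume.restrict (Ioc a b))) :
    ε * (∫ x in a..b, z x ^ 2) ≤
      ∫ x in a..b, (M x * z x + (∫ ξ in a..x, K₁ x ξ * z ξ) + ∫ ξ in x..b, K₂ x ξ * z ξ) * z x := by
  classical
  let f₁ : ℝ → ι ⊕ κ ⊕ κ → ℝ := fun x => Sum.elim (Z₁ x) 0
  let f₂ : ℝ → ℝ → ι ⊕ κ ⊕ κ → ℝ := fun x ξ => Sum.elim 0 (Sum.elim (Z₂ x ξ) 0)
  let f₃ : ℝ → ℝ → ι ⊕ κ ⊕ κ → ℝ := fun x ξ => Sum.elim 0 (Sum.elim 0 (Z₂ x ξ))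
  have hf₁ : Continuous f₁ := continuous_pi_sumElim hZ₁ continuous_const
  have hf₂ : Continuous (uncurry f₂) :=
    continuous_pi_sumElim continuous_const (continuous_pi_sumElim hZ₂ continuous_const)
  have hf₃ : Continuous (uncurry f₃) :=
    continuous_pi_sumElim continuous_const (continuous_pi_sumElim continuous_const hZ₂)
  let B := (Matrix.toBilin' U).toContinuousBilinearMap
  have B_comm : ∀ v w, B v w = B w v :=
    (Matrix.isSymm_toBilin'_iff_isSymm.2 (isSymm_of_posSemidef_sub_fromBlocks hU)).eq
  have M_eq : ∀ x, M x = B (f₁ x) (f₁ x) := fun x => by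
    simp [hM, B, f₁, Matrix.toBilin'_apply]
  have K₁_eq : ∀ x ξ, K₁ x ξ = semiseparableKernel a b B f₁ f₂ f₃ x ξ := fun x ξ => by
    simp [hK₁, semiseparableKernel, B, f₁, f₂, f₃, Matrix.toBilin'_apply]
  simp only [hK₂, K₁_eq, M_eq]
  refine mul_integral_sq_le_integral_semiseparable_mul_self B_comm hab hf₁ hf₂ hf₃ hz
    fun η hη => ?_
  have state_inl (i : ι) : semiseparableState a b f₁ f₂ f₃ z η (.inl i) = z η * Z₁ η i :=
    map_semiseparableState (.proj (.inl i)) a b f₁ (fun _ _ => rfl) (fun _ _ => rfl) z η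
  calc
    ε * z η ^ 2 ≤ ε * (z η ^ 2 * ∑ i, Z₁ η i ^ 2) := by
      gcongr
      exact le_mul_of_one_le_right (sq_nonneg _) (one_le_Z₁ η hη)
    _ = ε * ∑ i, semiseparableState a b f₁ f₂ f₃ z η (.inl i) ^ 2 := by
      simp only [state_inl, mul_pow, Finset.mul_sum]
    _ ≤ _ := mul_sum_sq_le_toBilin'_of_posSemidef_sub_fromBlocks hU _

end BlockVectors

section Monomials

theorem continuous_Z1vec (d : ℕ) : Continuous (Z1vec d) :=
  continuous_pi fun i => continuous_pow (i : ℕ)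

theorem continuous_uncurry_Z2vec (d : ℕ) : Continuous (Function.uncurry (Z2vec d)) :=
  continuous_pi fun p => (continuous_fst.pow (p.1.1 : ℕ)).mul (continuous_snd.pow (p.1.2 : ℕ))

theorem one_le_sum_sq_Z1vec (d : ℕ) (x : ℝ) : 1 ≤ ∑ i, Z1vec d x i ^ 2 := by
  simpa [Z1vec] using
    Finset.single_le_sum (fun i _ => sq_nonneg (Z1vec d x i)) (Finset.mem_univ (0 : Fin (d + 1)))

end Monomials

/-- If `U - diag(ε1 I, 0, 0) ⪰ 0` with `U` symmetric, then the semi-separable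
kernel operator built from `M`, `K1`, `K2` as in Theorem 1 of the paper
satisfies `⟨P z, z⟩ ≥ ε1 ‖z‖²` for continuous `z`. -/
theorem semiseparable_operator_lower_bound
    (d1 d2 : ℕ) (ε1 : ℝ) (hε1 : 0 < ε1)
    (U : Matrix (Fin (d1 + 1) ⊕ I2idx d2 ⊕ I2idx d2)
                (Fin (d1 + 1) ⊕ I2idx d2 ⊕ I2idx d2) ℝ)
    (hUsymm : U.IsSymm)
    (hUpsd : (U - Matrix.of (fun i j : Fin (d1 + 1) ⊕ I2idx d2 ⊕ I2idx d2 =>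
        match i, j with
        | Sum.inl a, Sum.inl b => if a = b then ε1 else (0 : ℝ)
        | _, _ => (0 : ℝ))).PosSemidef)
    (M : ℝ → ℝ) (K1 K2 : ℝ → ℝ → ℝ)
    (hM : ∀ x : ℝ, M x = ∑ i, ∑ j,
        Z1vec d1 x i * U (Sum.inl i) (Sum.inl j) * Z1vec d1 x j)
    (hK1 : ∀ x ξ : ℝ, K1 x ξ =
        (∑ i, ∑ p, Z1vec d1 x i * U (Sum.inl i) (Sum.inr (Sum.inl p)) * Z2vec d2 x ξ p)
      + (∑ p, ∑ i, Z2vec d2 ξ x p * U (Sum.inr (Sum.inr p)) (Sum.inl i) * Z1vec d1 ξ i)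
      + (∫ η in (0:ℝ)..ξ, ∑ p, ∑ q,
          Z2vec d2 η x p * U (Sum.inr (Sum.inr p)) (Sum.inr (Sum.inr q)) * Z2vec d2 η ξ q)
      + (∫ η in ξ..x, ∑ p, ∑ q,
          Z2vec d2 η x p * U (Sum.inr (Sum.inr p)) (Sum.inr (Sum.inl q)) * Z2vec d2 η ξ q)
      + (∫ η in x..(1:ℝ), ∑ p, ∑ q,
          Z2vec d2 η x p * U (Sum.inr (Sum.inl p)) (Sum.inr (Sum.inl q)) * Z2vec d2 η ξ q))
    (hK2 : ∀ x ξ : ℝ, K2 x ξ = K1 ξ x)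
    (z : ℝ → ℝ) (hz : Continuous z) :
    ε1 * (∫ x in (0:ℝ)..1, (z x) ^ 2) ≤
      ∫ x in (0:ℝ)..1,
        (M x * z x + (∫ ξ in (0:ℝ)..x, K1 x ξ * z ξ)
          + ∫ ξ in x..(1:ℝ), K2 x ξ * z ξ) * z x := by
  refine semiseparable_operator_lower_bound_general zero_le_one hε1.le (continuous_Z1vec d1)
    (fun x _ => one_le_sum_sq_Z1vec d1 x) (continuous_uncurry_Z2vec d2) ?_ hM hK1 hK2
    (memLp_restrict_of_subset_isCompact hz measurableSet_Ioc isCompact_Icc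
      Set.Ioc_subset_Icc_self 2 volume)
  convert hUpsd using 2
  ext (i | _) (j | _) <;> simp [Matrix.one_apply]

end
end

section
/- (Classical form of Lemma 1, the dual Linear Operator Inequality.) Let a, b, c be polynomial functions with a(x) ≥ α > 0 on [0,1], let ε1 > 0, and let M, K1, K2 be polynomial functions with K2(x,ξ) = K1(ξ,x) and M(x) ≥ ε1 on [0,1]. Define the operator (Pz)(x) = M(x)z(x) + ∫₀^x K1(x,ξ)z(ξ)dξ + ∫_x^1 K2(x,ξ)z(ξ)dξ, and the functions T0, T1, T2, T3, T4, T5, T6 by: T0(x) = (a''(x) − b'(x))M(x) + b(x)M'(x) + a(x)M''(x) + 2c(x)M(x) − (π²/2)αε1 + 2a(x)·[∂/∂x (K1(x,ξ) − K2(x,ξ))]evaluated at ξ = x; T1(x,ξ) = a(x)∂²K1/∂x²(x,ξ) + b(x)∂K1/∂x(x,ξ) + a(ξ)∂²K1/∂ξ²(x,ξ) + b(ξ)∂K1/∂ξ(x,ξ) + (c(x) + c(ξ))K1(x,ξ); T2(x,ξ) = T1(ξ,x); T3 = (a'(0) − b(0))M(0) + a(0)M'(0) − (π²/2)αε1; T4(x)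 = 2a(0)·∂K2/∂x(0,x) + π²αε1; T5 = (b(1) − a'(1))M(1) + a(1)M'(1); T6 = 2a(1)M(1); and the operator (Tz)(x) = T0(x)z(x) + ∫₀^x T1(x,ξ)z(ξ)dξ + ∫_x^1 T2(x,ξ)z(ξ)dξ. Then for every twice continuously differentiable z : [0,1] → ℝ satisfying M'(0)z(0) + M(0)z'(0) + ∫₀¹ ∂K2/∂x(0,ξ)z(ξ)dξ = 0 (i.e. the function w = Pz satisfies w'(0) = 0), we have 2∫₀¹ [a(x)(Pz)''(x) + b(x)(Pz)'(x) + c(x)(Pz)(x)]·z(x) dx ≤ ∫₀¹ (Tz)(x) z(x) dx + z(0)·(T3·z(0) + ∫₀¹ T4(x)z(x)dx) + z(1)·(T5·z(1) + T6·z'(1)). -/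
open MeasureTheory Real

noncomputable section

/-- `f` is (the restriction of) a polynomial function. -/
def IsPolyFun (f : ℝ → ℝ) : Prop := ∃ p : Polynomial ℝ, ∀ x, f x = p.eval x

/-- `f` is (the restriction of) a polynomial function of two variables. -/
def IsPolyFun2 (f : ℝ → ℝ → ℝ) : Prop :=
  ∃ p : MvPolynomial (Fin 2) ℝ, ∀ x y, f x y = MvPolynomial.eval ![x, y] p

/-- The semi-separable kernel operator
`(Pz)(x) = M(x)z(x) + ∫₀ˣ K1(x,ξ)z(ξ)dξ + ∫ₓ¹ K2(x,ξ)z(ξ)dξ`. -/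
def semisepOp (M : ℝ → ℝ) (K1 K2 : ℝ → ℝ → ℝ) (z : ℝ → ℝ) : ℝ → ℝ :=
  fun x => M x * z x + (∫ ξ in (0:ℝ)..x, K1 x ξ * z ξ)
    + ∫ ξ in x..(1:ℝ), K2 x ξ * z ξ

/-!
Leibniz's rule splits `A P z` into a semi-separable operator applied to `z` and a local part, which
in divergence form reads `(a M z')' + s z'` with `s = a M' + (b - a') M`. Paired with `z`, the first
summand may be replaced by its symmetrization, since interchanging the integrals over a triangle
shows that the adjoint swaps and transposes the two kernels. Integrating the second summand by parts
leaves boundary terms, a multiple of `z²`, and the dissipation `-2 ∫ a M z'²`. As `a M ≥ α ε1`, the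
dissipation is controlled by Wirtinger's inequality for `z - z 0`, with sharp constant `π² / 4`,
whose expansion accounts for the terms of `T0`, `T3` and `T4` containing `π`.
-/

open Function Set

section ParametricIntegral

variable {E : Type*} [NormedAddCommGroup E] [NormedSpace ℝ E] {F F' : ℝ → ℝ → E}

lemma continuous_integral_of_continuous_bounds {X : Type*} [TopologicalSpace X] {f : X → ℝ → E}
    (hf : Continuous (uncurry f)) {u v : X → ℝ} (hu : Continuous u) (hv : Continuous v) :
    Continuous fun x ↦ ∫ ξ in u x..v x, f x ξ := by
  have hsplit (x : X) : ∫ ξ in u x..v x, f x ξ = (∫ ξ in 0..v x, f x ξ) - ∫ ξ in 0..u x, f x ξ :=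
    (intervalIntegral.integral_interval_sub_left ((hf.uncurry_left x).intervalIntegrable _ _)
      ((hf.uncurry_left x).intervalIntegrable _ _)).symm
  simp only [hsplit]
  fun_prop

lemma intervalIntegral_swap_of_continuous (hF : Continuous (uncurry F)) (a b c d : ℝ) :
    ∫ x in a..b, ∫ y in c..d, F x y = ∫ y in c..d, ∫ x in a..b, F x y :=
  intervalIntegral_intervalIntegral_swap <|
    (hF.continuousOn.integrableOn_compact (isCompact_uIcc.prod isCompact_uIcc)).mono_set
      (prod_mono uIoc_subset_uIcc uIoc_subset_uIcc)

variable [CompleteSpace E]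

lemma hasDerivAt_integral_of_continuous_deriv (hF : ∀ t ξ, HasDerivAt (F · ξ) (F' t ξ) t)
    (hFc : ∀ t, Continuous (F t)) (hF'c : Continuous (uncurry F')) (l r x : ℝ) :
    HasDerivAt (fun t ↦ ∫ ξ in l..r, F t ξ) (∫ ξ in l..r, F' x ξ) x := by
  have hFTC (t ξ : ℝ) : ∫ s in x..t, F' s ξ = F t ξ - F x ξ :=
    intervalIntegral.integral_eq_sub_of_hasDerivAt (fun s _ ↦ hF s ξ)
      ((hF'c.uncurry_right ξ).intervalIntegrable _ _)
  have hprimitive (t : ℝ) :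
      ∫ ξ in l..r, F t ξ = (∫ ξ in l..r, F x ξ) + ∫ s in x..t, ∫ ξ in l..r, F' s ξ := by
    simp only [intervalIntegral_swap_of_continuous hF'c x t l r, hFTC]
    rw [intervalIntegral.integral_sub ((hFc t).intervalIntegrable _ _)
      ((hFc x).intervalIntegrable _ _), add_sub_cancel]
  have hcont : Continuous fun s ↦ ∫ ξ in l..r, F' s ξ := by fun_prop
  exact ((hcont.integral_hasStrictDerivAt x x).hasDerivAt.const_add _).congr_of_eventuallyEq
    (.of_forall hprimitive)

lemma hasDerivAt_integral_of_continuous_deriv_right (hF : ∀ t ξ, HasDerivAt (F · ξ) (F' t ξ) t)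
    (hFc : Continuous (uncurry F)) (hF'c : Continuous (uncurry F')) (l x : ℝ) :
    HasDerivAt (fun t ↦ ∫ ξ in l..t, F t ξ) (F x x + ∫ ξ in l..x, F' x ξ) x := by
  have hparam (t s : ℝ) : HasDerivAt (fun t ↦ ∫ ξ in l..s, F t ξ) (∫ ξ in l..s, F' t ξ) t :=
    hasDerivAt_integral_of_continuous_deriv hF (fun t ↦ hFc.uncurry_left t) hF'c l s t
  have hbound (t s : ℝ) : HasDerivAt (fun s ↦ ∫ ξ in l..s, F t ξ) (F t s) s :=
    ((hFc.uncurry_left t).integral_hasStrictDerivAt l s).hasDerivAt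
  have hparamc : Continuous fun v : ℝ × ℝ ↦ ∫ ξ in l..v.2, F' v.1 ξ := by fun_prop
  have hspan : Continuous (ContinuousLinearMap.toSpanSingleton ℝ : E → ℝ →L[ℝ] E) :=
    (ContinuousLinearMap.toSpanSingletonLIE ℝ E).continuous
  have htotal := hasStrictFDerivAt_uncurry_coprod (𝕜 := ℝ) (u := (x, x))
    (f := fun t s ↦ ∫ ξ in l..s, F t ξ)
    (f₁ := fun t s ↦ .toSpanSingleton ℝ (∫ ξ in l..s, F' t ξ))
    (f₂ := fun t s ↦ .toSpanSingleton ℝ (F t s))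
    (.of_forall fun v ↦ (hparam v.1 v.2).hasFDerivAt)
    (.of_forall fun v ↦ (hbound v.1 v.2).hasFDerivAt)
    (hspan.comp hparamc).continuousAt (hspan.comp hFc).continuousAt
  have hdiag := htotal.hasFDerivAt.comp_hasDerivAt (f := fun t ↦ (t, t)) x
    ((hasDerivAt_id x).prodMk (hasDerivAt_id x))
  refine hdiag.congr_deriv ?_
  simp [HasUncurry.uncurry, add_comm]

lemma integral_integral_swap_triangle (hF : Continuous (uncurry F)) (l r : ℝ) :
    ∫ x in l..r, ∫ ξ in x..r, F x ξ = ∫ x in l..r, ∫ ξ in l..x, F ξ x := by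
  have hderiv (t : ℝ) : HasDerivAt (fun t ↦ ∫ x in l..t, ∫ ξ in x..t, F x ξ)
      (∫ x in l..t, F x t) t := by
    have hinner (t x : ℝ) : HasDerivAt (fun t ↦ ∫ ξ in x..t, F x ξ) (F x t) t :=
      ((hF.uncurry_left x).integral_hasStrictDerivAt x t).hasDerivAt
    have hcont : Continuous (uncurry fun t x ↦ ∫ ξ in x..t, F x ξ) :=
      continuous_integral_of_continuous_bounds (f := fun p : ℝ × ℝ ↦ F p.2)
        (by fun_prop) continuous_snd continuous_fst
    simpa using hasDerivAt_integral_of_continuous_deriv_right (F' := fun t x ↦ F x t)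
      hinner hcont (by fun_prop) l t
  have hcont : Continuous fun t ↦ ∫ x in l..t, F x t :=
    continuous_integral_of_continuous_bounds (f := fun t x ↦ F x t)
      (by fun_prop) continuous_const continuous_id
  simpa using (intervalIntegral.integral_eq_sub_of_hasDerivAt (fun t _ ↦ hderiv t)
    (hcont.intervalIntegrable l r)).symm

end ParametricIntegral

section Wirtinger

variable {u u' : ℝ → ℝ} {l r : ℝ}

lemma hasDerivAt_mul_tan (k r x : ℝ) (hx : cos (k * (r - x)) ≠ 0) :
    HasDerivAt (fun t ↦ k * tan (k * (r - t))) (-(k ^ 2 + (k * tan (k * (r - x))) ^ 2)) x := by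
  have hinner : HasDerivAt (fun t ↦ k * (r - t)) (-k) x := by
    simpa using ((hasDerivAt_id x).const_sub r).const_mul k
  refine (((hasDerivAt_tan hx).comp x hinner).const_mul k).congr_deriv ?_
  rw [tan_eq_sin_div_cos]
  field_simp
  linear_combination k ^ 2 * sin_sq_add_cos_sq (k * (r - x))

lemma sq_mul_integral_sq_le_integral_deriv_sq (hlr : l ≤ r)
    (hu : ∀ x ∈ Icc l r, HasDerivAt u (u' x) x) (hu' : ContinuousOn u' (Icc l r)) (hul : u l = 0)
    {k : ℝ} (hk0 : 0 ≤ k) (hk : k * (r - l) < π / 2) :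
    k ^ 2 * ∫ x in l..r, u x ^ 2 ≤ ∫ x in l..r, u' x ^ 2 := by
  rw [← uIcc_of_le hlr] at hu hu'
  -- `q` solves the Riccati equation `q' = -(k² + q²)` and vanishes at `r`, so `u'² - k² u²` differs
  -- from the square `(u' - q u)²` by the exact derivative `(q u²)'`, which integrates to zero.
  set q : ℝ → ℝ := fun x ↦ k * tan (k * (r - x))
  have hq : ∀ x ∈ uIcc l r, HasDerivAt q (-(k ^ 2 + q x ^ 2)) x := by
    intro x hx
    rw [uIcc_of_le hlr] at hx
    have hnonneg : 0 ≤ k * (r - x) := mul_nonneg hk0 (sub_nonneg.2 hx.2)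
    have hle : k * (r - x) ≤ k * (r - l) := by gcongr; exact hx.1
    exact hasDerivAt_mul_tan k r x (cos_pos_of_mem_Ioo ⟨by linarith [pi_pos], by linarith⟩).ne'
  have hqc : ContinuousOn q (uIcc l r) := HasDerivAt.continuousOn hq
  have huc : ContinuousOn u (uIcc l r) := HasDerivAt.continuousOn hu
  have hexact : ∫ x in l..r, (-(k ^ 2 + q x ^ 2) * u x ^ 2 + q x * (2 * u x * u' x)) = 0 := by
    rw [intervalIntegral.integral_eq_sub_of_hasDerivAt (f := fun x ↦ q x * u x ^ 2)]
    · simp [hul, q]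
    · intro x hx
      simpa using (hq x hx).fun_mul ((hu x hx).fun_pow 2)
    · exact ContinuousOn.intervalIntegrable (by fun_prop)
  have hsquare : ∫ x in l..r, (u' x - q x * u x) ^ 2
      = (∫ x in l..r, u' x ^ 2) - k ^ 2 * (∫ x in l..r, u x ^ 2)
        - ∫ x in l..r, (-(k ^ 2 + q x ^ 2) * u x ^ 2 + q x * (2 * u x * u' x)) := by
    rw [← intervalIntegral.integral_const_mul, ← intervalIntegral.integral_sub,
      ← intervalIntegral.integral_sub]
    · congr! 2 with x
      ring
    all_goals exact ContinuousOn.intervalIntegrable (by fun_prop)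
  have hnonneg : 0 ≤ ∫ x in l..r, (u' x - q x * u x) ^ 2 :=
    intervalIntegral.integral_nonneg hlr fun x _ ↦ sq_nonneg _
  linarith

lemma wirtinger_of_eq_zero_left (hlr : l < r)
    (hu : ∀ x ∈ Icc l r, HasDerivAt u (u' x) x) (hu' : ContinuousOn u' (Icc l r)) (hul : u l = 0) :
    (π / (2 * (r - l))) ^ 2 * ∫ x in l..r, u x ^ 2 ≤ ∫ x in l..r, u' x ^ 2 := by
  have hlr' : 0 < r - l := sub_pos.2 hlr
  set k₀ := π / (2 * (r - l)) with hk₀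
  have hlim : Filter.Tendsto (fun k ↦ k ^ 2 * ∫ x in l..r, u x ^ 2) (nhdsWithin k₀ (Iio k₀))
      (nhds (k₀ ^ 2 * ∫ x in l..r, u x ^ 2)) :=
    (Continuous.tendsto (by fun_prop) k₀).mono_left nhdsWithin_le_nhds
  refine le_of_tendsto hlim ?_
  filter_upwards [Ioo_mem_nhdsLT (show 0 < k₀ by positivity)] with k hk
  refine sq_mul_integral_sq_le_integral_deriv_sq hlr.le hu hu' hul hk.1.le ?_
  calc k * (r - l) < k₀ * (r - l) := by gcongr; exact hk.2
    _ = π / 2 := by rw [hk₀]; field_simp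

lemma wirtinger_sub_left {z : ℝ → ℝ} (hlr : l < r) (hz : ContDiff ℝ 1 z) :
    (π / (2 * (r - l))) ^ 2
        * ((∫ x in l..r, z x ^ 2) - 2 * z l * (∫ x in l..r, z x) + (r - l) * z l ^ 2)
      ≤ ∫ x in l..r, deriv z x ^ 2 := by
  have hexpand : ∫ x in l..r, (z x - z l) ^ 2
      = (∫ x in l..r, z x ^ 2) - 2 * z l * (∫ x in l..r, z x) + (r - l) * z l ^ 2 := by
    rw [← intervalIntegral.integral_const_mul, ← smul_eq_mul (a := r - l),
      ← intervalIntegral.integral_const, ← intervalIntegral.integral_sub,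
      ← intervalIntegral.integral_add]
    · congr! 2 with x
      ring
    all_goals exact Continuous.intervalIntegrable (by fun_prop) _ _
  rw [← hexpand]
  exact wirtinger_of_eq_zero_left hlr
    (fun x _ ↦ (hz.differentiable one_ne_zero x).hasDerivAt.sub_const (z l))
    (hz.continuous_deriv le_rfl).continuousOn (sub_self _)

lemma weighted_wirtinger_sub_left {p z : ℝ → ℝ} {κ : ℝ} (hlr : l < r) (hp : Continuous p)
    (hκ : 0 ≤ κ) (hκp : ∀ x ∈ Icc l r, κ ≤ p x) (hz : ContDiff ℝ 1 z) :
    κ * (π / (2 * (r - l))) ^ 2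
        * ((∫ x in l..r, z x ^ 2) - 2 * z l * (∫ x in l..r, z x) + (r - l) * z l ^ 2)
      ≤ ∫ x in l..r, p x * deriv z x ^ 2 := by
  calc _ ≤ κ * ∫ x in l..r, deriv z x ^ 2 := by
        rw [mul_assoc]
        exact mul_le_mul_of_nonneg_left (wirtinger_sub_left hlr hz) hκ
    _ = ∫ x in l..r, κ * deriv z x ^ 2 := (intervalIntegral.integral_const_mul _ _).symm
    _ ≤ ∫ x in l..r, p x * deriv z x ^ 2 := by
        refine intervalIntegral.integral_mono_on hlr.le ?_ ?_ fun x hx ↦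
          mul_le_mul_of_nonneg_right (hκp x hx) (sq_nonneg _)
        all_goals exact Continuous.intervalIntegrable (by fun_prop) _ _

end Wirtinger

section Regularity

variable {f : ℝ → ℝ} {K : ℝ → ℝ → ℝ} {n : WithTop ℕ∞}

lemma IsPolyFun.contDiff (hf : IsPolyFun f) : ContDiff ℝ n f := by
  obtain ⟨p, hp⟩ := hf
  simpa only [funext hp] using! p.contDiff_aeval n

lemma IsPolyFun2.contDiff (hK : IsPolyFun2 K) : ContDiff ℝ n (uncurry K) := by
  obtain ⟨p, hp⟩ := hK
  let coord : Fin 2 → ℝ × ℝ →L[ℝ] ℝ := ![.fst ℝ ℝ ℝ, .snd ℝ ℝ ℝ]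
  have heval (q : ℝ × ℝ) : uncurry K q = MvPolynomial.eval (coord · q) p := by
    have hcoord : ![q.1, q.2] = (coord · q) := by funext i; fin_cases i <;> rfl
    rw [uncurry, hp, hcoord]
  rw [funext heval]
  exact (AnalyticOnNhd.eval_continuousLinearMap' coord p).contDiff

lemma contDiff_uncurry_deriv_left (hK : ContDiff ℝ (n + 1) (uncurry K)) :
    ContDiff ℝ n (uncurry fun x ξ ↦ deriv (K · ξ) x) := by
  have hK' : ContDiff ℝ (n + 1) (uncurry fun (q : ℝ × ℝ) t ↦ K t q.2) :=
    hK.comp (contDiff_snd.prodMk (contDiff_snd.comp contDiff_fst))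
  simpa only [fderiv_apply_one_eq_deriv] using!
    hK'.fderiv_apply contDiff_fst (contDiff_const (c := (1 : ℝ))) le_rfl

lemma continuous_uncurry_add_swap {X E : Type*} [TopologicalSpace X] [TopologicalSpace E] [Add E]
    [ContinuousAdd E] {K L : X → X → E} (hK : Continuous (uncurry K))
    (hL : Continuous (uncurry L)) : Continuous (uncurry fun x ξ ↦ K x ξ + L ξ x) :=
  hK.add (hL.comp continuous_swap)

lemma hasDerivAt_left_of_contDiff (hK : ContDiff ℝ 1 (uncurry K)) (x ξ : ℝ) :
    HasDerivAt (K · ξ) (deriv (K · ξ) x) x := by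
  have hslice : ContDiff ℝ 1 (K · ξ) := hK.comp (contDiff_id.prodMk contDiff_const)
  exact (hslice.differentiable one_ne_zero x).hasDerivAt

lemma iteratedDeriv_two {𝕜 E : Type*} [NontriviallyNormedField 𝕜] [NormedAddCommGroup E]
    [NormedSpace 𝕜 E] (f : 𝕜 → E) : iteratedDeriv 2 f = deriv (deriv f) := by
  rw [iteratedDeriv_succ, iteratedDeriv_one]

end Regularity

section SemisepOp

variable {M N u v z : ℝ → ℝ} {K1 K2 L1 L2 : ℝ → ℝ → ℝ}

lemma continuous_semisepOp (hM : Continuous M) (hK1 : Continuous (uncurry K1))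
    (hK2 : Continuous (uncurry K2)) (hz : Continuous z) : Continuous (semisepOp M K1 K2 z) := by
  have hupper : Continuous fun x ↦ ∫ ξ in x..1, K2 x ξ * z ξ :=
    continuous_integral_of_continuous_bounds (f := fun x ξ ↦ K2 x ξ * z ξ)
      (by fun_prop) continuous_id continuous_const
  unfold semisepOp
  fun_prop

lemma semisepOp_add {x : ℝ} (hK1 : Continuous (K1 x)) (hK2 : Continuous (K2 x))
    (hL1 : Continuous (L1 x)) (hL2 : Continuous (L2 x)) (hz : Continuous z) :
    semisepOp (fun x ↦ M x + N x) (fun x ξ ↦ K1 x ξ + L1 x ξ) (fun x ξ ↦ K2 x ξ + L2 x ξ) z x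
      = semisepOp M K1 K2 z x + semisepOp N L1 L2 z x := by
  simp only [semisepOp, add_mul]
  rw [intervalIntegral.integral_add, intervalIntegral.integral_add]
  · ring
  all_goals exact Continuous.intervalIntegrable (by fun_prop) _ _

lemma semisepOp_mul_left (f : ℝ → ℝ) (x : ℝ) :
    semisepOp (fun x ↦ f x * M x) (fun x ξ ↦ f x * K1 x ξ) (fun x ξ ↦ f x * K2 x ξ) z x
      = f x * semisepOp M K1 K2 z x := by
  simp only [semisepOp, mul_assoc, intervalIntegral.integral_const_mul, mul_add]

lemma integral_semisepOp_mul_eq_add (hM : Continuous M) (hK1 : Continuous (uncurry K1))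
    (hK2 : Continuous (uncurry K2)) (hu : Continuous u) (hv : Continuous v) :
    ∫ x in 0..1, semisepOp M K1 K2 u x * v x
      = (∫ x in 0..1, M x * u x * v x) + (∫ x in 0..1, ∫ ξ in 0..x, K1 x ξ * u ξ * v x)
        + ∫ x in 0..1, ∫ ξ in x..1, K2 x ξ * u ξ * v x := by
  have hupper : Continuous fun x ↦ ∫ ξ in x..1, K2 x ξ * u ξ * v x :=
    continuous_integral_of_continuous_bounds (f := fun x ξ ↦ K2 x ξ * u ξ * v x)
      (by fun_prop) continuous_id continuous_const
  rw [← intervalIntegral.integral_add, ← intervalIntegral.integral_add]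
  · simp only [semisepOp, add_mul, intervalIntegral.integral_mul_const]
  all_goals exact Continuous.intervalIntegrable (by fun_prop) _ _

lemma integral_semisepOp_mul_eq_integral_adjoint (hM : Continuous M)
    (hK1 : Continuous (uncurry K1)) (hK2 : Continuous (uncurry K2)) (hu : Continuous u)
    (hv : Continuous v) :
    ∫ x in 0..1, semisepOp M K1 K2 u x * v x
      = ∫ x in 0..1, semisepOp M (fun x ξ ↦ K2 ξ x) (fun x ξ ↦ K1 ξ x) v x * u x := by
  rw [integral_semisepOp_mul_eq_add hM hK1 hK2 hu hv,
    integral_semisepOp_mul_eq_add hM (by fun_prop) (by fun_prop) hv hu,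
    integral_integral_swap_triangle (by fun_prop) 0 1,
    integral_integral_swap_triangle (by fun_prop) 0 1]
  simp only [mul_right_comm _ (u _) (v _)]
  ring

lemma two_mul_integral_semisepOp_mul_self (hM : Continuous M) (hK1 : Continuous (uncurry K1))
    (hK2 : Continuous (uncurry K2)) (hz : Continuous z) :
    2 * ∫ x in 0..1, semisepOp M K1 K2 z x * z x
      = ∫ x in 0..1, semisepOp (fun x ↦ 2 * M x) (fun x ξ ↦ K1 x ξ + K2 ξ x)
          (fun x ξ ↦ K2 x ξ + K1 ξ x) z x * z x := by
  have hadjoint := integral_semisepOp_mul_eq_integral_adjoint hM hK1 hK2 hz hz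
  have hself := continuous_semisepOp hM hK1 hK2 hz
  have hstar := continuous_semisepOp (K1 := fun x ξ ↦ K2 ξ x) (K2 := fun x ξ ↦ K1 ξ x) hM
    (by fun_prop) (by fun_prop) hz
  rw [two_mul]
  nth_rw 2 [hadjoint]
  rw [← intervalIntegral.integral_add]
  · congr! 2 with x
    simp only [two_mul]
    rw [semisepOp_add, add_mul]
    all_goals fun_prop
  all_goals exact Continuous.intervalIntegrable (by fun_prop) _ _

lemma integral_semisepOp_sub_mul_self (hM : Continuous M) (hN : Continuous N)
    (hK1 : Continuous (uncurry K1)) (hK2 : Continuous (uncurry K2)) (hz : Continuous z) :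
    ∫ x in 0..1, semisepOp (fun x ↦ M x - N x) K1 K2 z x * z x
      = (∫ x in 0..1, semisepOp M K1 K2 z x * z x) - ∫ x in 0..1, N x * z x ^ 2 := by
  have hsemisep := continuous_semisepOp hM hK1 hK2 hz
  rw [← intervalIntegral.integral_sub]
  · congr! 2 with x
    simp only [semisepOp]
    ring
  all_goals exact Continuous.intervalIntegrable (by fun_prop) _ _

lemma hasDerivAt_semisepOp (hM : ContDiff ℝ 1 M) (hK1 : ContDiff ℝ 1 (uncurry K1))
    (hK2 : ContDiff ℝ 1 (uncurry K2)) (hz : ContDiff ℝ 1 z) (x : ℝ) :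
    HasDerivAt (semisepOp M K1 K2 z)
      (semisepOp (fun x ↦ deriv M x + (K1 x x - K2 x x)) (fun x ξ ↦ deriv (K1 · ξ) x)
        (fun x ξ ↦ deriv (K2 · ξ) x) z x + M x * deriv z x) x := by
  have hlocal := (hM.differentiable one_ne_zero x).hasDerivAt.fun_mul
    (hz.differentiable one_ne_zero x).hasDerivAt
  have hvolterra {K : ℝ → ℝ → ℝ} (hK : ContDiff ℝ 1 (uncurry K)) (l : ℝ) :
      HasDerivAt (fun t ↦ ∫ ξ in l..t, K t ξ * z ξ)
        (K x x * z x + ∫ ξ in l..x, deriv (K · ξ) x * z ξ) x := by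
    have hK'c := (contDiff_uncurry_deriv_left (n := 0) hK).continuous
    exact hasDerivAt_integral_of_continuous_deriv_right
      (fun t ξ ↦ (hasDerivAt_left_of_contDiff hK t ξ).mul_const (z ξ))
      (by fun_prop) (by fun_prop) l x
  have hsum := (hlocal.fun_add (hvolterra hK1 0)).fun_sub (hvolterra hK2 1)
  refine (hsum.congr_of_eventuallyEq (.of_forall fun t ↦ ?_)).congr_deriv ?_
  · simp only [semisepOp, intervalIntegral.integral_symm 1 t, sub_eq_add_neg]
  · rw [semisepOp, intervalIntegral.integral_symm 1 x]
    ring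

lemma iteratedDeriv_two_semisepOp (hM : ContDiff ℝ 2 M) (hK1 : ContDiff ℝ 2 (uncurry K1))
    (hK2 : ContDiff ℝ 2 (uncurry K2)) (hdiag : ∀ x, K1 x x = K2 x x) (hz : ContDiff ℝ 2 z)
    (x : ℝ) :
    iteratedDeriv 2 (semisepOp M K1 K2 z) x
      = semisepOp (fun x ↦ iteratedDeriv 2 M x + (deriv (K1 · x) x - deriv (K2 · x) x))
          (fun x ξ ↦ iteratedDeriv 2 (K1 · ξ) x) (fun x ξ ↦ iteratedDeriv 2 (K2 · ξ) x) z x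
        + 2 * deriv M x * deriv z x + M x * iteratedDeriv 2 z x := by
  have hfirst : deriv (semisepOp M K1 K2 z) = fun x ↦
      semisepOp (deriv M) (fun x ξ ↦ deriv (K1 · ξ) x) (fun x ξ ↦ deriv (K2 · ξ) x) z x
        + M x * deriv z x := by
    funext x
    simpa only [hdiag, sub_self, add_zero] using (hasDerivAt_semisepOp (hM.of_le one_le_two)
      (hK1.of_le one_le_two) (hK2.of_le one_le_two) (hz.of_le one_le_two) x).deriv
  have hM' : ContDiff ℝ 1 (deriv M) := hM.deriv'
  have hz' : ContDiff ℝ 1 (deriv z) := hz.deriv'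
  have hnonlocal := hasDerivAt_semisepOp hM' (contDiff_uncurry_deriv_left (n := 1) hK1)
    (contDiff_uncurry_deriv_left (n := 1) hK2) (hz.of_le one_le_two) x
  have hlocal := (hM.differentiable two_ne_zero x).hasDerivAt.fun_mul
    (hz'.differentiable one_ne_zero x).hasDerivAt
  rw [iteratedDeriv_two, hfirst, (hnonlocal.fun_add hlocal).deriv]
  simp only [iteratedDeriv_two]
  ring

end SemisepOp

/-- The second-order operator `A w = a w'' + b w' + c w`. -/
def diffOp (a b c w : ℝ → ℝ) (x : ℝ) : ℝ :=
  a x * iteratedDeriv 2 w x + b x * deriv w x + c x * w x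

/-- The coefficient `a M' + (b - a') M` of `z'` that remains once the terms of `A (M z)` containing
derivatives of `z` are put in divergence form `(a M z')' + s z'`. -/
def dualDrift (a b M : ℝ → ℝ) (x : ℝ) : ℝ :=
  a x * deriv M x + (b x - deriv a x) * M x

/-- The multiplier of the semi-separable part of `A ∘ P`, for `P` with multiplier `M` and kernels
`K1`, `K2` agreeing on the diagonal: `A M` plus the jump of the kernels' first derivative there. -/
def diffOpMultiplier (a b c M : ℝ → ℝ) (K1 K2 : ℝ → ℝ → ℝ) (x : ℝ) : ℝ :=
  diffOp a b c M x + a x * (deriv (K1 · x) x - deriv (K2 · x) x)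

section DualOperator

variable {a b c M z : ℝ → ℝ} {K K1 K2 : ℝ → ℝ → ℝ}

lemma continuous_uncurry_iteratedDeriv_two_left (hK : ContDiff ℝ 2 (uncurry K)) :
    Continuous (uncurry fun x ξ ↦ iteratedDeriv 2 (K · ξ) x) := by
  simpa only [iteratedDeriv_two] using (contDiff_uncurry_deriv_left (n := 0)
    (contDiff_uncurry_deriv_left (n := 1) hK)).continuous

lemma continuous_uncurry_diffOp (ha : Continuous a) (hb : Continuous b) (hc : Continuous c)
    (hK : ContDiff ℝ 2 (uncurry K)) :
    Continuous (uncurry fun x ξ ↦ diffOp a b c (K · ξ) x) := by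
  have hK' := (contDiff_uncurry_deriv_left (n := 1) hK).continuous
  have hK'' := continuous_uncurry_iteratedDeriv_two_left hK
  unfold diffOp
  fun_prop

lemma continuous_diffOpMultiplier (ha : Continuous a) (hb : Continuous b) (hc : Continuous c)
    (hM : ContDiff ℝ 2 M) (hK1 : ContDiff ℝ 1 (uncurry K1)) (hK2 : ContDiff ℝ 1 (uncurry K2)) :
    Continuous (diffOpMultiplier a b c M K1 K2) := by
  have hM' : Continuous (deriv M) := hM.continuous_deriv one_le_two
  have hdiag {K : ℝ → ℝ → ℝ} (hK : ContDiff ℝ 1 (uncurry K)) :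
      Continuous fun x ↦ deriv (K · x) x :=
    (contDiff_uncurry_deriv_left (n := 0) hK).continuous.comp (continuous_id.prodMk continuous_id)
  unfold diffOpMultiplier diffOp
  fun_prop

lemma hasDerivAt_dualDrift (ha : ContDiff ℝ 2 a) (hb : ContDiff ℝ 1 b) (hM : ContDiff ℝ 2 M)
    (x : ℝ) :
    HasDerivAt (dualDrift a b M) (a x * iteratedDeriv 2 M x + b x * deriv M x
      + (deriv b x - iteratedDeriv 2 a x) * M x) x := by
  have ha' : ContDiff ℝ 1 (deriv a) := ha.deriv'
  have hM' : ContDiff ℝ 1 (deriv M) := hM.deriv'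
  have hdrift := ((ha.differentiable two_ne_zero x).hasDerivAt.fun_mul
    (hM'.differentiable one_ne_zero x).hasDerivAt).fun_add
    (((hb.differentiable one_ne_zero x).hasDerivAt.fun_sub
      (ha'.differentiable one_ne_zero x).hasDerivAt).fun_mul
        (hM.differentiable two_ne_zero x).hasDerivAt)
  refine hdrift.congr_deriv ?_
  simp only [iteratedDeriv_two]
  ring

lemma contDiff_dualDrift (ha : ContDiff ℝ 2 a) (hb : ContDiff ℝ 1 b) (hM : ContDiff ℝ 2 M) :
    ContDiff ℝ 1 (dualDrift a b M) := by
  have ha' : ContDiff ℝ 1 (deriv a) := ha.deriv'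
  have hM' : ContDiff ℝ 1 (deriv M) := hM.deriv'
  exact ((ha.of_le one_le_two).mul hM').add ((hb.sub ha').mul (hM.of_le one_le_two))

lemma two_mul_diffOpMultiplier_sub_deriv_dualDrift (ha : ContDiff ℝ 2 a) (hb : ContDiff ℝ 1 b)
    (hM : ContDiff ℝ 2 M) (hK1 : ContDiff ℝ 1 (uncurry K1)) (hK2 : ContDiff ℝ 1 (uncurry K2))
    (x : ℝ) :
    2 * diffOpMultiplier a b c M K1 K2 x - deriv (dualDrift a b M) x
      = (iteratedDeriv 2 a x - deriv b x) * M x + b x * deriv M x + a x * iteratedDeriv 2 M x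
        + 2 * c x * M x + 2 * a x * deriv (fun t ↦ K1 t x - K2 t x) x := by
  rw [((hasDerivAt_left_of_contDiff hK1 x x).fun_sub (hasDerivAt_left_of_contDiff hK2 x x)).deriv,
    (hasDerivAt_dualDrift ha hb hM x).deriv, diffOpMultiplier, diffOp]
  ring

lemma semisepOp_diffOp (hK1 : ContDiff ℝ 2 (uncurry K1)) (hK2 : ContDiff ℝ 2 (uncurry K2))
    (hz : Continuous z) (x : ℝ) :
    semisepOp (diffOpMultiplier a b c M K1 K2) (fun x ξ ↦ diffOp a b c (K1 · ξ) x)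
        (fun x ξ ↦ diffOp a b c (K2 · ξ) x) z x
      = a x * semisepOp (fun x ↦ iteratedDeriv 2 M x + (deriv (K1 · x) x - deriv (K2 · x) x))
          (fun x ξ ↦ iteratedDeriv 2 (K1 · ξ) x) (fun x ξ ↦ iteratedDeriv 2 (K2 · ξ) x) z x
        + b x * semisepOp (deriv M) (fun x ξ ↦ deriv (K1 · ξ) x) (fun x ξ ↦ deriv (K2 · ξ) x) z x
        + c x * semisepOp M K1 K2 z x := by
  have hcont {K : ℝ → ℝ → ℝ} (hK : ContDiff ℝ 2 (uncurry K)) : Continuous (K x)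
      ∧ Continuous (fun ξ ↦ deriv (K · ξ) x) ∧ Continuous (fun ξ ↦ iteratedDeriv 2 (K · ξ) x) :=
    ⟨hK.continuous.uncurry_left x,
      (contDiff_uncurry_deriv_left (n := 1) hK).continuous.uncurry_left x,
      (continuous_uncurry_iteratedDeriv_two_left hK).uncurry_left x⟩
  obtain ⟨hK1c, hK1', hK1''⟩ := hcont hK1
  obtain ⟨hK2c, hK2', hK2''⟩ := hcont hK2
  rw [← semisepOp_mul_left, ← semisepOp_mul_left, ← semisepOp_mul_left, ← semisepOp_add,
    ← semisepOp_add]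
  · simp only [semisepOp, diffOpMultiplier, diffOp]
    ring
  all_goals fun_prop

lemma diffOp_semisepOp (ha : Differentiable ℝ a) (hM : ContDiff ℝ 2 M)
    (hK1 : ContDiff ℝ 2 (uncurry K1)) (hK2 : ContDiff ℝ 2 (uncurry K2))
    (hdiag : ∀ x, K1 x x = K2 x x) (hz : ContDiff ℝ 2 z) (x : ℝ) :
    diffOp a b c (semisepOp M K1 K2 z) x
      = semisepOp (diffOpMultiplier a b c M K1 K2) (fun x ξ ↦ diffOp a b c (K1 · ξ) x)
          (fun x ξ ↦ diffOp a b c (K2 · ξ) x) z x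
        + (deriv (fun t ↦ a t * M t * deriv z t) x + dualDrift a b M x * deriv z x) := by
  have hfirst := (hasDerivAt_semisepOp (hM.of_le one_le_two) (hK1.of_le one_le_two)
    (hK2.of_le one_le_two) (hz.of_le one_le_two) x).deriv
  have hz' : ContDiff ℝ 1 (deriv z) := hz.deriv'
  have hflux := (((ha x).hasDerivAt.fun_mul (hM.differentiable two_ne_zero x).hasDerivAt).fun_mul
    (hz'.differentiable one_ne_zero x).hasDerivAt).deriv
  simp only [hdiag, sub_self, add_zero] at hfirst
  rw [semisepOp_diffOp hK1 hK2 hz.continuous, diffOp,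
    iteratedDeriv_two_semisepOp hM hK1 hK2 hdiag hz, hfirst, hflux, dualDrift, iteratedDeriv_two z]
  ring

lemma two_mul_integral_divergence_form_mul {p s : ℝ → ℝ} (hp : ContDiff ℝ 1 p)
    (hs : ContDiff ℝ 1 s) (hz : ContDiff ℝ 2 z) (l r : ℝ) :
    2 * ∫ x in l..r, (deriv (fun t ↦ p t * deriv z t) x + s x * deriv z x) * z x
      = (2 * p r * deriv z r * z r + s r * z r ^ 2) - (2 * p l * deriv z l * z l + s l * z l ^ 2)
        - 2 * (∫ x in l..r, p x * deriv z x ^ 2) - ∫ x in l..r, deriv s x * z x ^ 2 := by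
  have hz' : ContDiff ℝ 1 (deriv z) := hz.deriv'
  have hflux : ContDiff ℝ 1 fun t ↦ p t * deriv z t := hp.mul hz'
  have hprimitive (x : ℝ) : HasDerivAt (fun x ↦ 2 * (p x * deriv z x * z x) + s x * z x ^ 2)
      (2 * ((deriv (fun t ↦ p t * deriv z t) x + s x * deriv z x) * z x)
        + 2 * (p x * deriv z x ^ 2) + deriv s x * z x ^ 2) x := by
    have hzx := (hz.differentiable two_ne_zero x).hasDerivAt
    have hfluxx := (hflux.differentiable one_ne_zero x).hasDerivAt
    have hsx := (hs.differentiable one_ne_zero x).hasDerivAt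
    refine (((hfluxx.fun_mul hzx).const_mul 2).fun_add (hsx.fun_mul (hzx.fun_pow 2))).congr_deriv ?_
    push_cast
    ring
  have hFTC := intervalIntegral.integral_eq_sub_of_hasDerivAt (a := l) (b := r)
    (fun x _ ↦ hprimitive x) (Continuous.intervalIntegrable (by fun_prop) _ _)
  rw [intervalIntegral.integral_add, intervalIntegral.integral_add,
    intervalIntegral.integral_const_mul, intervalIntegral.integral_const_mul] at hFTC
  · linear_combination hFTC
  all_goals exact Continuous.intervalIntegrable (by fun_prop) _ _

lemma integral_diffOp_semisepOp_mul (ha : ContDiff ℝ 2 a) (hb : Continuous b)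
    (hc : Continuous c) (hM : ContDiff ℝ 2 M) (hK1 : ContDiff ℝ 2 (uncurry K1))
    (hK2 : ContDiff ℝ 2 (uncurry K2)) (hdiag : ∀ x, K1 x x = K2 x x) (hz : ContDiff ℝ 2 z) :
    ∫ x in 0..1, diffOp a b c (semisepOp M K1 K2 z) x * z x
      = (∫ x in 0..1, semisepOp (diffOpMultiplier a b c M K1 K2)
          (fun x ξ ↦ diffOp a b c (K1 · ξ) x) (fun x ξ ↦ diffOp a b c (K2 · ξ) x) z x * z x)
        + ∫ x in 0..1, (deriv (fun t ↦ a t * M t * deriv z t) x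
          + dualDrift a b M x * deriv z x) * z x := by
  have hac := ha.continuous
  have ha'c : Continuous (deriv a) := ha.continuous_deriv one_le_two
  have hM'c : Continuous (deriv M) := hM.continuous_deriv one_le_two
  have hzc := hz.continuous
  have hz' : ContDiff ℝ 1 (deriv z) := hz.deriv'
  have hflux'c : Continuous (deriv fun x ↦ a x * M x * deriv z x) :=
    (((ha.mul hM).of_le one_le_two).mul hz').continuous_deriv le_rfl
  have hdriftc : Continuous (dualDrift a b M) := by unfold dualDrift; fun_prop
  have hsemisep := continuous_semisepOp
    (continuous_diffOpMultiplier hac hb hc hM (hK1.of_le one_le_two) (hK2.of_le one_le_two))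
    (continuous_uncurry_diffOp hac hb hc hK1) (continuous_uncurry_diffOp hac hb hc hK2) hzc
  rw [← intervalIntegral.integral_add]
  · simp only [diffOp_semisepOp (ha.differentiable two_ne_zero) hM hK1 hK2 hdiag hz, add_mul]
  all_goals exact Continuous.intervalIntegrable (by fun_prop) _ _

lemma two_mul_integral_diffOp_semisepOp_mul (ha : ContDiff ℝ 2 a) (hb : ContDiff ℝ 1 b)
    (hc : Continuous c) (hM : ContDiff ℝ 2 M) (hK1 : ContDiff ℝ 2 (uncurry K1))
    (hK2 : ContDiff ℝ 2 (uncurry K2)) (hdiag : ∀ x, K1 x x = K2 x x) (hz : ContDiff ℝ 2 z) :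
    2 * ∫ x in 0..1, diffOp a b c (semisepOp M K1 K2 z) x * z x
      = (∫ x in 0..1, semisepOp
          (fun x ↦ 2 * diffOpMultiplier a b c M K1 K2 x - deriv (dualDrift a b M) x)
          (fun x ξ ↦ diffOp a b c (K1 · ξ) x + diffOp a b c (K2 · x) ξ)
          (fun x ξ ↦ diffOp a b c (K2 · ξ) x + diffOp a b c (K1 · x) ξ) z x * z x)
        + (2 * a 1 * M 1 * deriv z 1 * z 1 + dualDrift a b M 1 * z 1 ^ 2)
        - (2 * a 0 * M 0 * deriv z 0 * z 0 + dualDrift a b M 0 * z 0 ^ 2)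
        - 2 * ∫ x in 0..1, a x * M x * deriv z x ^ 2 := by
  have hmult := continuous_diffOpMultiplier ha.continuous hb.continuous hc hM
    (hK1.of_le one_le_two) (hK2.of_le one_le_two)
  have hAK1 := continuous_uncurry_diffOp ha.continuous hb.continuous hc hK1
  have hAK2 := continuous_uncurry_diffOp ha.continuous hb.continuous hc hK2
  have hdrift := contDiff_dualDrift ha hb hM
  have hdrift'c : Continuous (deriv (dualDrift a b M)) := hdrift.continuous_deriv le_rfl
  have hsemisep := two_mul_integral_semisepOp_mul_self hmult hAK1 hAK2 hz.continuous
  have hlocal := two_mul_integral_divergence_form_mul ((ha.mul hM).of_le one_le_two) hdrift hz 0 1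
  rw [integral_semisepOp_sub_mul_self (by fun_prop) hdrift'c (continuous_uncurry_add_swap hAK1 hAK2)
    (continuous_uncurry_add_swap hAK2 hAK1) hz.continuous,
    integral_diffOp_semisepOp_mul ha hb.continuous hc hM hK1 hK2 hdiag hz]
  linear_combination hsemisep + hlocal

lemma two_mul_integral_diffOp_semisepOp_mul_le (ha : ContDiff ℝ 2 a) (hb : ContDiff ℝ 1 b)
    (hc : Continuous c) (hM : ContDiff ℝ 2 M) (hK1 : ContDiff ℝ 2 (uncurry K1))
    (hK2 : ContDiff ℝ 2 (uncurry K2)) (hdiag : ∀ x, K1 x x = K2 x x) (hz : ContDiff ℝ 2 z)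
    {κ : ℝ} (hκ : 0 ≤ κ) (hκaM : ∀ x ∈ Icc (0 : ℝ) 1, κ ≤ a x * M x) :
    2 * ∫ x in 0..1, diffOp a b c (semisepOp M K1 K2 z) x * z x
      ≤ (∫ x in 0..1, semisepOp
          (fun x ↦ 2 * diffOpMultiplier a b c M K1 K2 x - deriv (dualDrift a b M) x - π ^ 2 / 2 * κ)
          (fun x ξ ↦ diffOp a b c (K1 · ξ) x + diffOp a b c (K2 · x) ξ)
          (fun x ξ ↦ diffOp a b c (K2 · ξ) x + diffOp a b c (K1 · x) ξ) z x * z x)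
        + (2 * a 1 * M 1 * deriv z 1 * z 1 + dualDrift a b M 1 * z 1 ^ 2)
        - (2 * a 0 * M 0 * deriv z 0 * z 0 + dualDrift a b M 0 * z 0 ^ 2)
        + π ^ 2 * κ * z 0 * (∫ x in 0..1, z x) - π ^ 2 / 2 * κ * z 0 ^ 2 := by
  have hmult := continuous_diffOpMultiplier ha.continuous hb.continuous hc hM
    (hK1.of_le one_le_two) (hK2.of_le one_le_two)
  have hAK1 := continuous_uncurry_diffOp ha.continuous hb.continuous hc hK1
  have hAK2 := continuous_uncurry_diffOp ha.continuous hb.continuous hc hK2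
  have hdrift' := (contDiff_dualDrift ha hb hM).continuous_deriv le_rfl
  have hwirtinger := weighted_wirtinger_sub_left one_pos (ha.mul hM).continuous hκ hκaM
    (hz.of_le one_le_two)
  rw [two_mul_integral_diffOp_semisepOp_mul ha hb hc hM hK1 hK2 hdiag hz,
    integral_semisepOp_sub_mul_self (by fun_prop) continuous_const
      (continuous_uncurry_add_swap hAK1 hAK2) (continuous_uncurry_add_swap hAK2 hAK1)
      hz.continuous, intervalIntegral.integral_const_mul]
  linear_combination 2 * hwirtinger

theorem dual_linear_operator_inequality_general (ha : ContDiff ℝ 2 a) (hb : ContDiff ℝ 1 b)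
    (hc : Continuous c) (hM : ContDiff ℝ 2 M) (hK1 : ContDiff ℝ 2 (uncurry K1))
    (hK2 : ContDiff ℝ 2 (uncurry K2)) (hdiag : ∀ x, K1 x x = K2 x x)
    {κ : ℝ} (hκ : 0 ≤ κ) (hκaM : ∀ x ∈ Icc (0 : ℝ) 1, κ ≤ a x * M x)
    {T0 T4 : ℝ → ℝ} {T1 T2 : ℝ → ℝ → ℝ} {T3 T5 T6 : ℝ}
    (hT0 : ∀ x, T0 x = (iteratedDeriv 2 a x - deriv b x) * M x + b x * deriv M x
      + a x * iteratedDeriv 2 M x + 2 * c x * M x - π ^ 2 / 2 * κ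
      + 2 * a x * deriv (fun t ↦ K1 t x - K2 t x) x)
    (hT1 : ∀ x ξ, T1 x ξ = diffOp a b c (K1 · ξ) x + diffOp a b c (K2 · x) ξ)
    (hT2 : ∀ x ξ, T2 x ξ = T1 ξ x)
    (hT3 : T3 = (deriv a 0 - b 0) * M 0 + a 0 * deriv M 0 - π ^ 2 / 2 * κ)
    (hT4 : ∀ x, T4 x = 2 * a 0 * deriv (K2 · x) 0 + π ^ 2 * κ)
    (hT5 : T5 = (b 1 - deriv a 1) * M 1 + a 1 * deriv M 1) (hT6 : T6 = 2 * a 1 * M 1)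
    (hz : ContDiff ℝ 2 z)
    (hbc : deriv M 0 * z 0 + M 0 * deriv z 0 + (∫ ξ in 0..1, deriv (K2 · ξ) 0 * z ξ) = 0) :
    2 * ∫ x in 0..1, diffOp a b c (semisepOp M K1 K2 z) x * z x
      ≤ (∫ x in 0..1, semisepOp T0 T1 T2 z x * z x)
        + z 0 * (T3 * z 0 + ∫ x in 0..1, T4 x * z x) + z 1 * (T5 * z 1 + T6 * deriv z 1) := by
  have hmult (x : ℝ) : T0 x
      = 2 * diffOpMultiplier a b c M K1 K2 x - deriv (dualDrift a b M) x - π ^ 2 / 2 * κ := by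
    rw [hT0, two_mul_diffOpMultiplier_sub_deriv_dualDrift ha hb hM (hK1.of_le one_le_two)
      (hK2.of_le one_le_two)]
    ring
  have hupper (x ξ : ℝ) : T2 x ξ = diffOp a b c (K2 · ξ) x + diffOp a b c (K1 · x) ξ := by
    rw [hT2, hT1, add_comm]
  have hboundary : ∫ x in 0..1, T4 x * z x
      = 2 * a 0 * (∫ x in 0..1, deriv (K2 · x) 0 * z x) + π ^ 2 * κ * ∫ x in 0..1, z x := by
    have hK2' := (contDiff_uncurry_deriv_left (n := 1) hK2).continuous.uncurry_left 0
    rw [← intervalIntegral.integral_const_mul, ← intervalIntegral.integral_const_mul,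
      ← intervalIntegral.integral_add]
    · simp only [hT4, add_mul, mul_assoc]
    all_goals exact Continuous.intervalIntegrable (by fun_prop) _ _
  have henergy := two_mul_integral_diffOp_semisepOp_mul_le ha hb hc hM hK1 hK2 hdiag hz hκ hκaM
  simp only [← hmult, ← hT1, ← hupper, dualDrift] at henergy
  rw [hboundary, hT3, hT5, hT6]
  linear_combination henergy - 2 * a 0 * z 0 * hbc

end DualOperator

/-- Classical form of Lemma 1 (the dual Linear Operator Inequality). -/
theorem dual_linear_operator_inequality
    (a b c : ℝ → ℝ) (α : ℝ) (hα : 0 < α)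
    (ha : IsPolyFun a) (hb : IsPolyFun b) (hc : IsPolyFun c)
    (haα : ∀ x ∈ Set.Icc (0:ℝ) 1, α ≤ a x)
    (ε1 : ℝ) (hε1 : 0 < ε1)
    (M : ℝ → ℝ) (K1 K2 : ℝ → ℝ → ℝ)
    (hMp : IsPolyFun M) (hK1p : IsPolyFun2 K1) (hK2p : IsPolyFun2 K2)
    (hsym : ∀ x ξ : ℝ, K2 x ξ = K1 ξ x)
    (hMε : ∀ x ∈ Set.Icc (0:ℝ) 1, ε1 ≤ M x)
    (T0 T4 : ℝ → ℝ) (T1 T2 : ℝ → ℝ → ℝ) (T3 T5 T6 : ℝ)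
    (hT0 : ∀ x : ℝ, T0 x =
      (iteratedDeriv 2 a x - deriv b x) * M x + b x * deriv M x
        + a x * iteratedDeriv 2 M x + 2 * c x * M x - π ^ 2 / 2 * α * ε1
        + 2 * a x * deriv (fun t => K1 t x - K2 t x) x)
    (hT1 : ∀ x ξ : ℝ, T1 x ξ =
      a x * iteratedDeriv 2 (fun t => K1 t ξ) x + b x * deriv (fun t => K1 t ξ) x
        + a ξ * iteratedDeriv 2 (fun s => K1 x s) ξ + b ξ * deriv (fun s => K1 x s) ξ
        + (c x + c ξ) * K1 x ξ)
    (hT2 : ∀ x ξ : ℝ, T2 x ξ = T1 ξ x)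
    (hT3 : T3 = (deriv a 0 - b 0) * M 0 + a 0 * deriv M 0 - π ^ 2 / 2 * α * ε1)
    (hT4 : ∀ x : ℝ, T4 x = 2 * a 0 * deriv (fun t => K2 t x) 0 + π ^ 2 * α * ε1)
    (hT5 : T5 = (b 1 - deriv a 1) * M 1 + a 1 * deriv M 1)
    (hT6 : T6 = 2 * a 1 * M 1) :
    ∀ z : ℝ → ℝ, ContDiff ℝ 2 z →
      (deriv M 0 * z 0 + M 0 * deriv z 0
        + (∫ ξ in (0:ℝ)..1, deriv (fun t => K2 t ξ) 0 * z ξ) = 0) →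
      2 * (∫ x in (0:ℝ)..1,
            (a x * iteratedDeriv 2 (semisepOp M K1 K2 z) x
              + b x * deriv (semisepOp M K1 K2 z) x
              + c x * semisepOp M K1 K2 z x) * z x)
        ≤ (∫ x in (0:ℝ)..1,
              (T0 x * z x + (∫ ξ in (0:ℝ)..x, T1 x ξ * z ξ)
                + ∫ ξ in x..(1:ℝ), T2 x ξ * z ξ) * z x)
          + z 0 * (T3 * z 0 + ∫ x in (0:ℝ)..1, T4 x * z x)
          + z 1 * (T5 * z 1 + T6 * deriv z 1) := by
  intro z hz hbc
  have hκaM : ∀ x ∈ Icc (0 : ℝ) 1, α * ε1 ≤ a x * M x := fun x hx ↦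
    mul_le_mul (haα x hx) (hMε x hx) hε1.le (hα.le.trans (haα x hx))
  exact dual_linear_operator_inequality_general ha.contDiff hb.contDiff
    (hc.contDiff (n := 0)).continuous hMp.contDiff hK1p.contDiff hK2p.contDiff
    (fun x ↦ (hsym x x).symm) (mul_pos hα hε1).le hκaM (fun x ↦ by rw [hT0]; ring)
    (fun x ξ ↦ by simp only [hT1, hsym, diffOp]; ring) hT2 (by rw [hT3]; ring)
    (fun x ↦ by rw [hT4]; ring) hT5 hT6 hz hbc

end
end

section
/- (Dual Γ3 identity from the proof of Lemma 1.) Let a : [0,1] → ℝ be continuous, K1, K2 : [0,1]² → ℝ twice continuously differentiable with K1(x,ξ) = K2(ξ,x) for all x, ξ, and z : [0,1] → ℝ continuously differentiable. Then ∫₀¹ z(x)·a(x)·(d²/dx²)[∫₀^x K1(x,ξ)z(ξ)dξ + ∫_x^1 K2(x,ξ)z(ξ)dξ] dx = ∫₀¹ z(x)²·a(x)·[∂/∂x (K1(x,ξ) − K2(x,ξ))]evaluated at ξ = x dx + (1/2)∫₀¹∫₀^x z(x)·[a(x)·∂²K1/∂x²(x,ξ) + a(ξ)·∂²K1/∂ξ²(x,ξ)]·z(ξ)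 dξ dx + (1/2)∫₀¹∫_x^1 z(x)·[a(x)·∂²K2/∂x²(x,ξ) + a(ξ)·∂²K2/∂ξ²(x,ξ)]·z(ξ) dξ dx. -/
open MeasureTheory

/-!
Write `Γ z x` for the bracket. Since `K1` and `K2` agree on the diagonal, the boundary terms of the
first Leibniz derivative cancel, and the second derivative of `Γ z` is
`(∂ₓK1 - ∂ₓK2)(x, x) z x` plus the same bracket with kernels `∂ₓ²K1`, `∂ₓ²K2`. After multiplying by
`z a` and integrating, the last part is a pair of integrals over the two triangles cut out by the
diagonal. Reflecting in the diagonal exchanges the triangles and, as `K1 x ξ = K2 ξ x`, turns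
`a x ∂ₓ²K1` into `a ξ ∂_ξ²K2` and `a x ∂ₓ²K2` into `a ξ ∂_ξ²K1`; the stated form is the average of
the integral and its reflection.
-/

open Function intervalIntegral

section PartialDerivatives

variable {E : Type*} [NormedAddCommGroup E] [NormedSpace ℝ E]

theorem contDiff_deriv_fst {n : WithTop ℕ∞} {F : ℝ → ℝ → E} (hF : ContDiff ℝ (n + 1) (uncurry F)) :
    ContDiff ℝ n (uncurry fun x ξ => deriv (fun t => F t ξ) x) := by
  have hF_swap : ContDiff ℝ (n + 1) (uncurry fun (p : ℝ × ℝ) t => F t p.2) :=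
    hF.comp (contDiff_snd.prodMk (contDiff_snd.comp contDiff_fst))
  exact hF_swap.fderiv_apply contDiff_fst contDiff_const le_rfl

theorem contDiff_iteratedDeriv_fst {n : WithTop ℕ∞} (k : ℕ) {F : ℝ → ℝ → E}
    (hF : ContDiff ℝ (n + k) (uncurry F)) :
    ContDiff ℝ n (uncurry fun x ξ => iteratedDeriv k (fun t => F t ξ) x) := by
  induction k generalizing n with
  | zero => simpa using hF
  | succ k ih =>
    simp only [iteratedDeriv_succ]
    refine contDiff_deriv_fst (ih ?_)
    convert hF using 1
    push_cast
    ring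

theorem continuous_iteratedDeriv_fst (k : ℕ) {F : ℝ → ℝ → E} (hF : ContDiff ℝ k (uncurry F)) :
    Continuous (uncurry fun x ξ => iteratedDeriv k (fun t => F t ξ) x) :=
  (contDiff_iteratedDeriv_fst (n := 0) k (by simpa using hF)).continuous

theorem hasDerivAt_iteratedDeriv_fst (k : ℕ) {F : ℝ → ℝ → E}
    (hF : ContDiff ℝ (k + 1) (uncurry F)) (x ξ : ℝ) :
    HasDerivAt (iteratedDeriv k fun t => F t ξ) (iteratedDeriv (k + 1) (fun t => F t ξ) x) x := by
  have hslice : ContDiff ℝ (k + 1) fun t => F t ξ := hF.comp (contDiff_id.prodMk contDiff_const)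
  rw [iteratedDeriv_succ]
  exact (hslice.differentiable_iteratedDeriv' k x).hasDerivAt

theorem hasDerivAt_diag {f f₁ f₂ : ℝ → ℝ → E} (hf₁ : Continuous (uncurry f₁))
    (hf₂ : Continuous (uncurry f₂)) (h₁ : ∀ x y, HasDerivAt (fun t => f t y) (f₁ x y) x)
    (h₂ : ∀ x y, HasDerivAt (f x) (f₂ x y) y) (x : ℝ) :
    HasDerivAt (fun t => f t t) (f₁ x x + f₂ x x) x := by
  let toCLM := ContinuousLinearMap.toSpanSingletonCLE (𝕜 := ℝ) (E := E)
  have hf : HasStrictFDerivAt (uncurry f) ((toCLM (f₁ x x)).coprod (toCLM (f₂ x x))) (x, x) :=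
    hasStrictFDerivAt_uncurry_coprod (𝕜 := ℝ) (u := (x, x))
      (f₁ := fun t u => toCLM (f₁ t u)) (f₂ := fun t u => toCLM (f₂ t u))
      (.of_forall fun v => (h₁ v.1 v.2).hasFDerivAt)
      (.of_forall fun v => (h₂ v.1 v.2).hasFDerivAt)
      (toCLM.continuous.comp hf₁).continuousAt (toCLM.continuous.comp hf₂).continuousAt
  have hdiag : HasDerivAt (fun t : ℝ => (t, t)) (1, 1) x :=
    (hasDerivAt_id x).prodMk (hasDerivAt_id x)
  simpa [toCLM, comp_def] using
    HasFDerivAt.comp_hasDerivAt (f := fun t : ℝ => (t, t)) x hf.hasFDerivAt hdiag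

end PartialDerivatives

section ParametricIntegrals

variable {E : Type*} [NormedAddCommGroup E] [NormedSpace ℝ E]

theorem hasDerivAt_integral_param {F F' : ℝ → ℝ → E} (hF : Continuous (uncurry F))
    (hF' : Continuous (uncurry F')) (hderiv : ∀ x ξ, HasDerivAt (fun t => F t ξ) (F' x ξ) x)
    (a b x : ℝ) :
    HasDerivAt (fun t => ∫ ξ in a..b, F t ξ) (∫ ξ in a..b, F' x ξ) x := by
  obtain ⟨C, hC⟩ : ∃ C, ∀ p ∈ Metric.closedBall x 1 ×ˢ Set.uIcc a b, ‖uncurry F' p‖ ≤ C :=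
    ((isCompact_closedBall x 1).prod isCompact_uIcc).exists_bound_of_continuousOn hF'.continuousOn
  refine (hasDerivAt_integral_of_dominated_loc_of_deriv_le (bound := fun _ => C)
    (Metric.closedBall_mem_nhds x one_pos)
    (.of_forall fun t => (hF.uncurry_left t).aestronglyMeasurable)
    ((hF.uncurry_left x).intervalIntegrable a b) (hF'.uncurry_left x).aestronglyMeasurable
    ?_ intervalIntegrable_const (.of_forall fun ξ _ t _ => hderiv t ξ)).2
  exact .of_forall fun ξ hξ t ht => hC (t, ξ) ⟨ht, Set.uIoc_subset_uIcc hξ⟩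

theorem continuous_integral_to_param {F : ℝ → ℝ → E} (hF : Continuous (uncurry F)) (c : ℝ) :
    Continuous fun x => ∫ ξ in c..x, F x ξ :=
  continuous_parametric_intervalIntegral_of_continuous hF continuous_id

theorem continuous_integral_from_param {F : ℝ → ℝ → E} (hF : Continuous (uncurry F)) (d : ℝ) :
    Continuous fun x => ∫ ξ in x..d, F x ξ := by
  simpa only [integral_symm d] using (continuous_integral_to_param hF d).fun_neg

variable [CompleteSpace E]

theorem hasDerivAt_integral_to_param {F F' : ℝ → ℝ → E} (hF : Continuous (uncurry F))
    (hF' : Continuous (uncurry F')) (hderiv : ∀ x ξ, HasDerivAt (fun t => F t ξ) (F' x ξ) x)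
    (c x : ℝ) :
    HasDerivAt (fun t => ∫ ξ in c..t, F t ξ) ((∫ ξ in c..x, F' x ξ) + F x x) x :=
  hasDerivAt_diag (f := fun t u => ∫ ξ in c..u, F t ξ) (f₁ := fun t u => ∫ ξ in c..u, F' t ξ)
    (continuous_parametric_primitive_of_continuous hF') hF
    (fun t u => hasDerivAt_integral_param hF hF' hderiv c u t)
    (fun t u => ((hF.uncurry_left t).integral_hasStrictDerivAt c u).hasDerivAt) x

theorem integral_triangle_swap {f : ℝ → ℝ → E} (hf : Continuous (uncurry f)) (c d : ℝ) :
    ∫ x in c..d, ∫ ξ in c..x, f x ξ = ∫ x in c..d, ∫ ξ in x..d, f ξ x := by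
  have hslice : Continuous (uncurry fun t x => ∫ ξ in x..t, f ξ x) := by
    have hsub (t x : ℝ) : ∫ ξ in x..t, f ξ x = (∫ ξ in c..t, f ξ x) - ∫ ξ in c..x, f ξ x :=
      (integral_interval_sub_left ((hf.uncurry_right x).intervalIntegrable c t)
        ((hf.uncurry_right x).intervalIntegrable c x)).symm
    have hf_swap : Continuous (uncurry fun (p : ℝ × ℝ) ξ => f ξ p.2) :=
      hf.comp (continuous_snd.prodMk (continuous_snd.comp continuous_fst))
    simp only [hsub]
    exact (continuous_parametric_intervalIntegral_of_continuous hf_swap continuous_fst).sub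
      (continuous_parametric_intervalIntegral_of_continuous hf_swap continuous_snd)
  -- Both sides are primitives in `d` of the slice integral, and both vanish at `d = c`.
  have hderiv (t : ℝ) : HasDerivAt (fun t => ∫ x in c..t, ∫ ξ in x..t, f ξ x)
      (∫ ξ in c..t, f t ξ) t := by
    simpa using hasDerivAt_integral_to_param hslice hf
      (fun t x => ((hf.uncurry_right x).integral_hasStrictDerivAt x t).hasDerivAt) c t
  simpa using integral_eq_sub_of_hasDerivAt (a := c) (b := d) (fun t _ => hderiv t)
    ((continuous_integral_to_param hf c).intervalIntegrable c d)

end ParametricIntegrals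

/-- The integral over `[c, d]` of the kernel equal to `F` below the diagonal (`ξ < x`) and to `G`
above it, as a function of `x`. The two pieces are oriented integrals, so `x` need not lie between
`c` and `d`. The bracket in the theorem has `F x ξ = K1 x ξ * z ξ` and `G x ξ = K2 x ξ * z ξ`. -/
noncomputable def splitIntegral {E : Type*} [NormedAddCommGroup E] [NormedSpace ℝ E] (c d : ℝ)
    (F G : ℝ → ℝ → E) (x : ℝ) : E :=
  (∫ ξ in c..x, F x ξ) + ∫ ξ in x..d, G x ξ

section SplitIntegral

variable {E : Type*} [NormedAddCommGroup E] [NormedSpace ℝ E] {F G F' G' F'' G'' : ℝ → ℝ → E}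

theorem continuous_splitIntegral (hF : Continuous (uncurry F)) (hG : Continuous (uncurry G))
    (c d : ℝ) : Continuous (splitIntegral c d F G) :=
  (continuous_integral_to_param hF c).add (continuous_integral_from_param hG d)

theorem splitIntegral_add (hF : Continuous (uncurry F)) (hG : Continuous (uncurry G))
    (hF' : Continuous (uncurry F')) (hG' : Continuous (uncurry G')) (c d x : ℝ) :
    splitIntegral c d (fun x ξ => F x ξ + F' x ξ) (fun x ξ => G x ξ + G' x ξ) x =
      splitIntegral c d F G x + splitIntegral c d F' G' x := by
  have hint {H : ℝ → ℝ → E} (hH : Continuous (uncurry H)) (a b : ℝ) :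
      IntervalIntegrable (H x) volume a b := (hH.uncurry_left x).intervalIntegrable a b
  simp only [splitIntegral]
  rw [integral_add (hint hF c x) (hint hF' c x), integral_add (hint hG x d) (hint hG' x d)]
  abel

theorem integral_splitIntegral (hF : Continuous (uncurry F)) (hG : Continuous (uncurry G))
    (c d : ℝ) :
    ∫ x in c..d, splitIntegral c d F G x =
      (∫ x in c..d, ∫ ξ in c..x, F x ξ) + ∫ x in c..d, ∫ ξ in x..d, G x ξ :=
  integral_add ((continuous_integral_to_param hF c).intervalIntegrable c d)
    ((continuous_integral_from_param hG d).intervalIntegrable c d)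

variable [CompleteSpace E]

theorem hasDerivAt_splitIntegral (hF : Continuous (uncurry F)) (hG : Continuous (uncurry G))
    (hF' : Continuous (uncurry F')) (hG' : Continuous (uncurry G'))
    (hFF' : ∀ x ξ, HasDerivAt (fun t => F t ξ) (F' x ξ) x)
    (hGG' : ∀ x ξ, HasDerivAt (fun t => G t ξ) (G' x ξ) x) (c d x : ℝ) :
    HasDerivAt (splitIntegral c d F G) (F x x - G x x + splitIntegral c d F' G' x) x := by
  have hsub : splitIntegral c d F G = fun t => (∫ ξ in c..t, F t ξ) - ∫ ξ in d..t, G t ξ := by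
    ext t
    rw [splitIntegral, integral_symm d t, sub_eq_add_neg]
  rw [hsub]
  refine ((hasDerivAt_integral_to_param hF hF' hFF' c x).sub
    (hasDerivAt_integral_to_param hG hG' hGG' d x)).congr_deriv ?_
  rw [splitIntegral, integral_symm d x]
  abel

theorem iteratedDeriv_two_splitIntegral (hF : Continuous (uncurry F)) (hG : Continuous (uncurry G))
    (hF' : Continuous (uncurry F')) (hG' : Continuous (uncurry G'))
    (hF'' : Continuous (uncurry F'')) (hG'' : Continuous (uncurry G''))
    (hFF' : ∀ x ξ, HasDerivAt (fun t => F t ξ) (F' x ξ) x)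
    (hGG' : ∀ x ξ, HasDerivAt (fun t => G t ξ) (G' x ξ) x)
    (hF'F'' : ∀ x ξ, HasDerivAt (fun t => F' t ξ) (F'' x ξ) x)
    (hG'G'' : ∀ x ξ, HasDerivAt (fun t => G' t ξ) (G'' x ξ) x)
    (hdiag : ∀ x, F x x = G x x) (c d x : ℝ) :
    iteratedDeriv 2 (splitIntegral c d F G) x =
      F' x x - G' x x + splitIntegral c d F'' G'' x := by
  have hfirst : deriv (splitIntegral c d F G) = splitIntegral c d F' G' := by
    ext t
    rw [(hasDerivAt_splitIntegral hF hG hF' hG' hFF' hGG' c d t).deriv, hdiag, sub_self, zero_add]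
  rw [iteratedDeriv_succ, iteratedDeriv_one, hfirst]
  exact (hasDerivAt_splitIntegral hF' hG' hF'' hG'' hF'F'' hG'G'' c d x).deriv

theorem integral_splitIntegral_swap (hF : Continuous (uncurry F)) (hG : Continuous (uncurry G))
    (c d : ℝ) :
    ∫ x in c..d, splitIntegral c d (fun x ξ => G ξ x) (fun x ξ => F ξ x) x =
      ∫ x in c..d, splitIntegral c d F G x := by
  have hF_swap : Continuous (uncurry fun x ξ => F ξ x) := hF.comp continuous_swap
  have hG_swap : Continuous (uncurry fun x ξ => G ξ x) := hG.comp continuous_swap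
  rw [integral_splitIntegral hG_swap hF_swap, integral_splitIntegral hF hG,
    integral_triangle_swap hG_swap, integral_triangle_swap hF, add_comm]

theorem two_smul_integral_splitIntegral (hF : Continuous (uncurry F)) (hG : Continuous (uncurry G))
    (c d : ℝ) :
    (2 : ℝ) • ∫ x in c..d, splitIntegral c d F G x =
      (∫ x in c..d, ∫ ξ in c..x, (F x ξ + G ξ x)) +
        ∫ x in c..d, ∫ ξ in x..d, (G x ξ + F ξ x) := by
  have hF_swap : Continuous (uncurry fun x ξ => F ξ x) := hF.comp continuous_swap
  have hG_swap : Continuous (uncurry fun x ξ => G ξ x) := hG.comp continuous_swap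
  rw [← integral_splitIntegral (F := fun x ξ => F x ξ + G ξ x) (G := fun x ξ => G x ξ + F ξ x)
    (hF.add hG_swap) (hG.add hF_swap)]
  simp only [splitIntegral_add hF hG hG_swap hF_swap]
  rw [integral_add ((continuous_splitIntegral hF hG c d).intervalIntegrable c d)
    ((continuous_splitIntegral hG_swap hF_swap c d).intervalIntegrable c d),
    integral_splitIntegral_swap hF hG, two_smul]

end SplitIntegral

section WeightedKernels

variable {E : Type*} [NormedAddCommGroup E] [NormedSpace ℝ E] {K L : ℝ → ℝ → ℝ} {z : ℝ → E}

theorem smul_splitIntegral (w : ℝ → ℝ) (F G : ℝ → ℝ → E) (c d x : ℝ) :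
    w x • splitIntegral c d F G x =
      splitIntegral c d (fun x ξ => w x • F x ξ) (fun x ξ => w x • G x ξ) x := by
  simp only [splitIntegral, intervalIntegral.integral_smul, smul_add]

theorem continuous_iteratedDeriv_fst_smul (k : ℕ) (hK : ContDiff ℝ k (uncurry K))
    (hz : Continuous z) :
    Continuous (uncurry fun x ξ => iteratedDeriv k (fun t => K t ξ) x • z ξ) :=
  (continuous_iteratedDeriv_fst k hK).smul (hz.comp continuous_snd)

variable [CompleteSpace E]

theorem iteratedDeriv_two_splitIntegral_smul (hK : ContDiff ℝ 2 (uncurry K))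
    (hL : ContDiff ℝ 2 (uncurry L)) (hdiag : ∀ x, K x x = L x x) (hz : Continuous z) (c d x : ℝ) :
    iteratedDeriv 2 (splitIntegral c d (fun x ξ => K x ξ • z ξ) fun x ξ => L x ξ • z ξ) x =
      deriv (fun t => K t x - L t x) x • z x +
        splitIntegral c d (fun x ξ => iteratedDeriv 2 (fun t => K t ξ) x • z ξ)
          (fun x ξ => iteratedDeriv 2 (fun t => L t ξ) x • z ξ) x := by
  have hone : (1 : WithTop ℕ∞) ≤ 2 := one_le_two
  have hcont {H : ℝ → ℝ → ℝ} (hH : ContDiff ℝ 2 (uncurry H)) :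
      Continuous (uncurry fun x ξ => H x ξ • z ξ) := hH.continuous.smul (hz.comp continuous_snd)
  have hfirst {H : ℝ → ℝ → ℝ} (hH : ContDiff ℝ 2 (uncurry H)) (x ξ : ℝ) :
      HasDerivAt (fun t => H t ξ) (iteratedDeriv 1 (fun t => H t ξ) x) x := by
    simpa using hasDerivAt_iteratedDeriv_fst 0 (hH.of_le (by simp)) x ξ
  have hsecond {H : ℝ → ℝ → ℝ} (hH : ContDiff ℝ 2 (uncurry H)) (x ξ : ℝ) :
      HasDerivAt (iteratedDeriv 1 fun t => H t ξ) (iteratedDeriv 2 (fun t => H t ξ) x) x :=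
    hasDerivAt_iteratedDeriv_fst 1 (by simpa [one_add_one_eq_two] using hH) x ξ
  rw [((hfirst hK x x).fun_sub (hfirst hL x x)).deriv, sub_smul]
  exact iteratedDeriv_two_splitIntegral (hcont hK) (hcont hL)
    (continuous_iteratedDeriv_fst_smul 1 (hK.of_le hone) hz)
    (continuous_iteratedDeriv_fst_smul 1 (hL.of_le hone) hz)
    (continuous_iteratedDeriv_fst_smul 2 hK hz) (continuous_iteratedDeriv_fst_smul 2 hL hz)
    (fun x ξ => (hfirst hK x ξ).smul_const (z ξ)) (fun x ξ => (hfirst hL x ξ).smul_const (z ξ))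
    (fun x ξ => (hsecond hK x ξ).smul_const (z ξ)) (fun x ξ => (hsecond hL x ξ).smul_const (z ξ))
    (fun x => by rw [hdiag]) c d x

theorem integral_smul_iteratedDeriv_two_splitIntegral {w : ℝ → ℝ} (hw : Continuous w)
    (hK : ContDiff ℝ 2 (uncurry K)) (hL : ContDiff ℝ 2 (uncurry L)) (hdiag : ∀ x, K x x = L x x)
    (hz : Continuous z) (c d : ℝ) :
    ∫ x in c..d, w x • iteratedDeriv 2
        (splitIntegral c d (fun x ξ => K x ξ • z ξ) fun x ξ => L x ξ • z ξ) x =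
      (∫ x in c..d, w x • deriv (fun t => K t x - L t x) x • z x) +
        ∫ x in c..d, splitIntegral c d
          (fun x ξ => w x • iteratedDeriv 2 (fun t => K t ξ) x • z ξ)
          (fun x ξ => w x • iteratedDeriv 2 (fun t => L t ξ) x • z ξ) x := by
  have hKL : ContDiff ℝ (1 + 1) (uncurry fun x ξ => K x ξ - L x ξ) := by
    rw [one_add_one_eq_two]
    exact hK.sub hL
  have hdiag_deriv : Continuous fun x => deriv (fun t => K t x - L t x) x :=
    (contDiff_deriv_fst hKL).continuous.comp (continuous_id.prodMk continuous_id)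
  have hboundary : Continuous fun x => w x • deriv (fun t => K t x - L t x) x • z x :=
    hw.smul (hdiag_deriv.smul hz)
  have hsplit : Continuous fun x => w x • splitIntegral c d
      (fun x ξ => iteratedDeriv 2 (fun t => K t ξ) x • z ξ)
      (fun x ξ => iteratedDeriv 2 (fun t => L t ξ) x • z ξ) x :=
    hw.smul (continuous_splitIntegral (continuous_iteratedDeriv_fst_smul 2 hK hz)
      (continuous_iteratedDeriv_fst_smul 2 hL hz) c d)
  simp only [iteratedDeriv_two_splitIntegral_smul hK hL hdiag hz, smul_add]
  rw [integral_add (hboundary.intervalIntegrable c d) (hsplit.intervalIntegrable c d)]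
  simp only [smul_splitIntegral]

end WeightedKernels

theorem dual_gamma3_identity_general
    (a : ℝ → ℝ) (ha : Continuous a)
    (K1 K2 : ℝ → ℝ → ℝ)
    (hK1 : ContDiff ℝ 2 (fun p : ℝ × ℝ => K1 p.1 p.2))
    (hsym : ∀ x ξ : ℝ, K1 x ξ = K2 ξ x)
    (z : ℝ → ℝ) (hz : Continuous z) (c d : ℝ) :
    (∫ x in c..d, z x * a x *
        iteratedDeriv 2
          (fun t => (∫ ξ in c..t, K1 t ξ * z ξ)
            + ∫ ξ in t..d, K2 t ξ * z ξ) x)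
      = (∫ x in c..d,
            (z x) ^ 2 * a x * deriv (fun t => K1 t x - K2 t x) x)
        + (1/2) * (∫ x in c..d, ∫ ξ in c..x,
            z x * (a x * iteratedDeriv 2 (fun t => K1 t ξ) x
              + a ξ * iteratedDeriv 2 (fun s => K1 x s) ξ) * z ξ)
        + (1/2) * (∫ x in c..d, ∫ ξ in x..d,
            z x * (a x * iteratedDeriv 2 (fun t => K2 t ξ) x
              + a ξ * iteratedDeriv 2 (fun s => K2 x s) ξ) * z ξ) := by
  have hK2 : ContDiff ℝ 2 (uncurry K2) := by
    have hflip : uncurry K2 = (fun p : ℝ × ℝ => K1 p.1 p.2) ∘ Prod.swap :=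
      funext fun p => (hsym p.2 p.1).symm
    rw [hflip]
    exact hK1.comp (contDiff_snd.prodMk contDiff_fst)
  have hswap1 (x ξ : ℝ) :
      iteratedDeriv 2 (fun s => K1 x s) ξ = iteratedDeriv 2 (fun s => K2 s x) ξ := by
    simp only [hsym]
  have hswap2 (x ξ : ℝ) :
      iteratedDeriv 2 (fun s => K2 x s) ξ = iteratedDeriv 2 (fun s => K1 s x) ξ := by
    simp only [hsym]
  have hcont {K : ℝ → ℝ → ℝ} (hK : ContDiff ℝ 2 (uncurry K)) :
      Continuous (uncurry fun x ξ => (z x * a x) • iteratedDeriv 2 (fun t => K t ξ) x • z ξ) :=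
    ((hz.mul ha).comp continuous_fst).smul (continuous_iteratedDeriv_fst_smul 2 hK hz)
  have hleibniz := integral_smul_iteratedDeriv_two_splitIntegral (hz.fun_mul ha) hK1 hK2
    (fun x => hsym x x) hz c d
  have hsymmetrize := two_smul_integral_splitIntegral (hcont hK1) (hcont hK2) c d
  simp only [smul_eq_mul] at hleibniz hsymmetrize
  have hboundary (x k : ℝ) : z x ^ 2 * a x * k = z x * a x * (k * z x) := by ring
  have hinterior (x ξ k l : ℝ) : z x * (a x * k + a ξ * l) * z ξ =
      z x * a x * (k * z ξ) + z ξ * a ξ * (l * z x) := by ring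
  simp only [hswap1, hswap2, hboundary, hinterior]
  refine hleibniz.trans ?_
  linarith

/-- Dual Γ₃ identity from the proof of Lemma 1. -/
theorem dual_gamma3_identity
    (a : ℝ → ℝ) (ha : Continuous a)
    (K1 K2 : ℝ → ℝ → ℝ)
    (hK1 : ContDiff ℝ 2 (fun p : ℝ × ℝ => K1 p.1 p.2))
    (hK2 : ContDiff ℝ 2 (fun p : ℝ × ℝ => K2 p.1 p.2))
    (hsym : ∀ x ξ : ℝ, K1 x ξ = K2 ξ x)
    (z : ℝ → ℝ) (hz : ContDiff ℝ 1 z) :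
    (∫ x in (0:ℝ)..1, z x * a x *
        iteratedDeriv 2
          (fun t => (∫ ξ in (0:ℝ)..t, K1 t ξ * z ξ)
            + ∫ ξ in t..(1:ℝ), K2 t ξ * z ξ) x)
      = (∫ x in (0:ℝ)..1,
            (z x) ^ 2 * a x * deriv (fun t => K1 t x - K2 t x) x)
        + (1/2) * (∫ x in (0:ℝ)..1, ∫ ξ in (0:ℝ)..x,
            z x * (a x * iteratedDeriv 2 (fun t => K1 t ξ) x
              + a ξ * iteratedDeriv 2 (fun s => K1 x s) ξ) * z ξ)
        + (1/2) * (∫ x in (0:ℝ)..1, ∫ ξ in x..(1:ℝ),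
            z x * (a x * iteratedDeriv 2 (fun t => K2 t ξ) x
              + a ξ * iteratedDeriv 2 (fun s => K2 x s) ξ) * z ξ) := by
  exact dual_gamma3_identity_general a ha K1 K2 hK1 hsym z hz.continuous 0 1
end
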